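/- Let n ≥ 4. The initial ideal in_≺(I_{n-2}) is a squarefree monomial ideal; in particular, in_≺(I_{n-2}) is a radical ideal of S. -/

import Mathlib

open MvPolynomial

/-- The set `D` of diagonal variables `x_{ii}` (0-indexed). -/
def Dset (n : ℕ) : Set (Sym2 (Fin n)) := {v | ∃ i : Fin n, v = s(i, i)}

/-- The set `U` of variables `x_{13}, x_{24}, …, x_{n-2,n}, x_{12}, x_{n-1,n}` (0-indexed). -/
def Uset (n : ℕ) : Set (Sym2 (Fin n)) :=
  {v | ∃ i j : Fin n, v = s(i, j) ∧
    ((j : ℕ) = (i : ℕ) + 2 ∨ ((i : ℕ) = 0 ∧ (j : ℕ) = 1) ∨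
      ((i : ℕ) = n - 2 ∧ (j : ℕ) = n - 1))}

/-- `rank` encodes the linear order on the variables described in the paper:
`x_{11} ≻ … ≻ x_{nn} ≻ x_{13} ≻ … ≻ x_{n-2,n} ≻ x_{12} ≻ x_{n-1,n} ≻ (rest)`,
where a smaller rank means a larger variable. -/
def IsGoodRank (n : ℕ) (rank : Sym2 (Fin n) → ℕ) : Prop :=
  Function.Injective rank ∧
  (∀ i : Fin n, rank s(i, i) = (i : ℕ)) ∧
  (∀ i j : Fin n, (j : ℕ) = (i : ℕ) + 2 → rank s(i, j) = n + (i : ℕ)) ∧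
  (∀ i j : Fin n, (i : ℕ) = 0 → (j : ℕ) = 1 → rank s(i, j) = 2 * n - 2) ∧
  (∀ i j : Fin n, (i : ℕ) = n - 2 → (j : ℕ) = n - 1 → rank s(i, j) = 2 * n - 1) ∧
  (∀ v : Sym2 (Fin n), v ∉ Dset n ∪ Uset n → 2 * n ≤ rank v)

/-- The degree reverse lexicographic order on exponent vectors induced by `rank`:
`a ≺ b` iff `deg a < deg b`, or the degrees agree and at the `rank`-largest (i.e. smallest)
variable where `a` and `b` differ, `a` has the larger exponent. -/
def DegRevLexLT {n : ℕ} (rank : Sym2 (Fin n) → ℕ) (a b : Sym2 (Fin n) →₀ ℕ) : Prop :=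
  (a.sum fun _ e => e) < (b.sum fun _ e => e) ∨
    ((a.sum fun _ e => e) = (b.sum fun _ e => e) ∧
      ∃ v : Sym2 (Fin n), b v < a v ∧ ∀ w : Sym2 (Fin n), rank v < rank w → a w = b w)

/-- `μ` is the leading monomial (exponent vector) of `f` w.r.t. the degrevlex order `≺`. -/
def IsLeadingMonomial {K : Type*} [Field K] {n : ℕ} (rank : Sym2 (Fin n) → ℕ)
    (f : MvPolynomial (Sym2 (Fin n)) K) (μ : Sym2 (Fin n) →₀ ℕ) : Prop :=
  μ ∈ f.support ∧ ∀ ν ∈ f.support, ν ≠ μ → DegRevLexLT rank ν μ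

/-- The minor `[a_1,…,a_s | b_1,…,b_s]` of the generic symmetric matrix `X = (x_{ij})`. -/
noncomputable def symMinor (K : Type*) [Field K] {n s : ℕ} (a b : Fin s → Fin n) :
    MvPolynomial (Sym2 (Fin n)) K :=
  Matrix.det (Matrix.of fun k l => (MvPolynomial.X s(a k, b l) : MvPolynomial (Sym2 (Fin n)) K))

/-- The ideal `I_t` of `S` generated by all `t × t` minors of the generic symmetric
matrix `X`. -/
noncomputable def minorsIdeal (K : Type*) [Field K] (n t : ℕ) :
    Ideal (MvPolynomial (Sym2 (Fin n)) K) :=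
  Ideal.span {p | ∃ a b : Fin t → Fin n, StrictMono a ∧ StrictMono b ∧ p = symMinor K a b}

/-- The initial ideal `in_≺(I)`: the ideal generated by the leading monomials of the
nonzero elements of `I`. -/
noncomputable def initialIdeal {K : Type*} [Field K] {n : ℕ} (rank : Sym2 (Fin n) → ℕ)
    (I : Ideal (MvPolynomial (Sym2 (Fin n)) K)) : Ideal (MvPolynomial (Sym2 (Fin n)) K) :=
  Ideal.span {p | ∃ f ∈ I, f ≠ 0 ∧ ∃ μ : Sym2 (Fin n) →₀ ℕ,
    IsLeadingMonomial rank f μ ∧ p = MvPolynomial.monomial μ 1}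

/-!
In the order `1, 3, 5, …, 6, 4, 2` of the vertices the edges in `U` form a Hamiltonian cycle `G`.
Give weight `0` to the diagonal variables, `1` to the edges of `G` and a large `W` to the others.

Suppose that the vertices are partitioned into induced rooted trees of `G`, any two joined by
exactly one edge, with fewer than `n - 2` vertices that are not roots. Generic `y_v` then admit a
symmetric matrix of rank less than `n - 2` over a power series ring whose entry at `v` is
`y_v t ^ weight v + ⋯`, except that the coefficient `y_v` becomes `0` on the boundary, that is, at
the diagonal variables of the roots and at the edges joining different trees. Every `f ∈ I_{n-2}`
vanishes on this matrix, so the weight-initial form of `f` vanishes once the boundary variables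
are set to `0`: every monomial of minimal weight in `f` involves a boundary variable.

Cutting the cycle into three arcs and choosing a root in each leaves `n - 3` other vertices and a
boundary of three diagonal variables and three edges. A set of variables that meets all these
boundaries contains, by a greedy walk along the cycle, the variables of the leading monomial of
some `(n - 2)`-minor, a squarefree product of diagonal variables and edges. So every nonzero
`f ∈ I_{n-2}` has a monomial divisible by one of these leading monomials, and by division with
remainder they generate the initial ideal.
-/

section KillVars

variable {σ R : Type*} [CommSemiring R]

open Classical in
/-- The endomorphism of `R[X]` setting the variables in `Z` to zero and fixing the others. -/
noncomputable def killVars (Z : Set σ) : MvPolynomial σ R →ₐ[R] MvPolynomial σ R :=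
  aeval fun v => if v ∈ Z then 0 else X v

theorem killVars_monomial_of_forall {Z : Set σ} {m : σ →₀ ℕ} (hm : ∀ v ∈ Z, m v = 0) (c : R) :
    killVars Z (monomial m c) = monomial m c := by
  rw [killVars, aeval_monomial, algebraMap_eq, monomial_eq]
  congr 1
  refine Finsupp.prod_congr fun v hv => ?_
  rw [if_neg fun hvZ => Finsupp.mem_support_iff.1 hv (hm v hvZ)]

theorem killVars_monomial_of_exists {Z : Set σ} {m : σ →₀ ℕ} (hm : ∃ v ∈ Z, m v ≠ 0) (c : R) :
    killVars Z (monomial m c) = 0 := by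
  obtain ⟨v, hvZ, hv⟩ := hm
  rw [killVars, aeval_monomial, Finsupp.prod,
    Finset.prod_eq_zero (Finsupp.mem_support_iff.2 hv) (by rw [if_pos hvZ, zero_pow hv]), mul_zero]

theorem coeff_killVars {Z : Set σ} {m : σ →₀ ℕ} (hm : ∀ v ∈ Z, m v = 0)
    (f : MvPolynomial σ R) : coeff m (killVars Z f) = coeff m f := by
  induction f using MvPolynomial.induction_on' with
  | add p q hp hq => rw [map_add, coeff_add, coeff_add, hp, hq]
  | monomial a c =>
    by_cases ha : ∀ v ∈ Z, a v = 0
    · rw [killVars_monomial_of_forall ha]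
    · push Not at ha
      obtain ⟨v, hvZ, hv⟩ := ha
      classical rw [killVars_monomial_of_exists ⟨v, hvZ, hv⟩, coeff_zero, coeff_monomial, if_neg]
      rintro rfl
      exact hv (hm v hvZ)

end KillVars

theorem isRadical_span_squarefree_monomials {σ R : Type*} [CommRing R] [IsReduced R]
    {G : Set (σ →₀ ℕ)} (hG : ∀ m ∈ G, ∀ v, m v ≤ 1) :
    (Ideal.span ((fun m => monomial m (1 : R)) '' G)).IsRadical := by
  rintro f ⟨k, hk⟩
  rw [mem_ideal_span_monomial_image]
  intro μ hμ
  by_contra! hcon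
  have hker : Ideal.span ((fun m => monomial m (1 : R)) '' G) ≤
      RingHom.ker (killVars {v | μ v = 0}) := by
    rw [Ideal.span_le]
    rintro _ ⟨m, hm, rfl⟩
    obtain ⟨v, hv⟩ : ∃ v, μ v < m v := by
      simpa only [Finsupp.le_def, not_forall, not_le] using hcon m hm
    have hμv : μ v = 0 := Nat.lt_one_iff.1 (hv.trans_le (hG m hm v))
    exact killVars_monomial_of_exists ⟨v, hμv, (Nat.zero_le _).trans_lt hv |>.ne'⟩ 1
  have hpow : killVars {v | μ v = 0} f ^ k = 0 := by rw [← map_pow]; exact hker hk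
  have hcoeff := coeff_killVars (Z := {v | μ v = 0}) (fun _ hv => hv) f
  rw [IsReduced.eq_zero _ ⟨k, hpow⟩, coeff_zero] at hcoeff
  exact mem_support_iff.1 hμ hcoeff.symm

section DegRevLex

variable {n : ℕ} {rank : Sym2 (Fin n) → ℕ} {a b c : Sym2 (Fin n) →₀ ℕ}

namespace DegRevLexLT

protected theorem irrefl (a : Sym2 (Fin n) →₀ ℕ) : ¬ DegRevLexLT rank a a := by
  rintro (h | ⟨-, v, h, -⟩) <;> exact lt_irrefl _ h

protected theorem trans (hr : Function.Injective rank) (h₁ : DegRevLexLT rank a b)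
    (h₂ : DegRevLexLT rank b c) : DegRevLexLT rank a c := by
  rcases h₁ with h₁ | ⟨e₁, v, hv, h₁⟩ <;> rcases h₂ with h₂ | ⟨e₂, w, hw, h₂⟩
  · exact Or.inl (h₁.trans h₂)
  · exact Or.inl (e₂ ▸ h₁)
  · exact Or.inl (e₁ ▸ h₂)
  · refine Or.inr ⟨e₁.trans e₂, ?_⟩
    rcases lt_trichotomy (rank v) (rank w) with h | h | h
    · exact ⟨w, by rwa [h₁ w h], fun x hx => (h₁ x (h.trans hx)).trans (h₂ x hx)⟩
    · obtain rfl := hr h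
      exact ⟨v, hw.trans hv, fun x hx => (h₁ x hx).trans (h₂ x hx)⟩
    · exact ⟨v, by rwa [← h₂ v h], fun x hx => (h₁ x hx).trans (h₂ x (h.trans hx))⟩

protected theorem trichotomous (a b : Sym2 (Fin n) →₀ ℕ) :
    DegRevLexLT rank a b ∨ a = b ∨ DegRevLexLT rank b a := by
  rcases lt_trichotomy (a.sum fun _ e => e) (b.sum fun _ e => e) with h | hdeg | h
  · exact Or.inl (Or.inl h)
  · by_cases hab : a = b
    · exact Or.inr (Or.inl hab)
    obtain ⟨v, hv, hmax⟩ := (a.neLocus b).exists_max_image rank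
      (Finsupp.nonempty_neLocus_iff.2 hab)
    have hrest : ∀ w, rank v < rank w → a w = b w := fun w hw => by
      by_contra hne
      exact hw.not_ge (hmax w (Finsupp.mem_neLocus.2 hne))
    rcases (Finsupp.mem_neLocus.1 hv).lt_or_gt with h | h
    · exact Or.inr (Or.inr (Or.inr ⟨hdeg.symm, v, h, fun w hw => (hrest w hw).symm⟩))
    · exact Or.inl (Or.inr ⟨hdeg, v, h, hrest⟩)
  · exact Or.inr (Or.inr (Or.inl h))

theorem of_sum_eq (hdeg : (a.sum fun _ e => e) = b.sum fun _ e => e) {v : Sym2 (Fin n)}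
    (hv : b v < a v) (hle : ∀ w, rank v ≤ rank w → b w ≤ a w) : DegRevLexLT rank a b := by
  refine (DegRevLexLT.trichotomous a b).resolve_right ?_
  rintro (rfl | h | ⟨-, w, hw, h⟩)
  · exact lt_irrefl _ hv
  · exact h.ne' hdeg
  · rcases lt_or_ge (rank w) (rank v) with hwv | hwv
    · exact hv.ne (h v hwv)
    · exact hw.not_ge (hle w hwv)

theorem add_left (h : DegRevLexLT rank a b) (c : Sym2 (Fin n) →₀ ℕ) :
    DegRevLexLT rank (c + a) (c + b) := by
  have hadd (d : Sym2 (Fin n) →₀ ℕ) : ((c + d).sum fun _ e => e) =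
      (c.sum fun _ e => e) + d.sum fun _ e => e :=
    Finsupp.sum_add_index' (fun _ => rfl) fun _ _ _ => rfl
  rcases h with h | ⟨hdeg, v, hv, h⟩
  · exact Or.inl (by rw [hadd, hadd]; exact Nat.add_lt_add_left h _)
  · exact Or.inr ⟨by rw [hadd, hadd, hdeg], v, Nat.add_lt_add_left hv _,
      fun w hw => congrArg (c w + ·) (h w hw)⟩

theorem of_lt (h : a < b) : DegRevLexLT rank a b := by
  left
  obtain ⟨hle, v, hv⟩ := Finsupp.lt_def.1 h
  rw [Finsupp.sum_fintype _ _ fun _ => rfl, Finsupp.sum_fintype _ _ fun _ => rfl]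
  exact Finset.sum_lt_sum (fun w _ => hle w) ⟨v, Finset.mem_univ v, hv⟩

theorem finite_setOf (rank : Sym2 (Fin n) → ℕ) (b : Sym2 (Fin n) →₀ ℕ) :
    {a | DegRevLexLT rank a b}.Finite := by
  refine (Set.finite_Iic (Finsupp.equivFunOnFinite.symm fun _ => b.sum fun _ e => e)).subset ?_
  intro a ha v
  have hdeg : (a.sum fun _ e => e) ≤ b.sum fun _ e => e := ha.elim le_of_lt fun h => h.1.le
  refine le_trans ?_ hdeg
  rw [Finsupp.sum_fintype _ _ fun _ => rfl]
  exact Finset.single_le_sum (f := fun v => a v) (fun _ _ => Nat.zero_le _) (Finset.mem_univ v)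

protected theorem wellFounded (hr : Function.Injective rank) :
    WellFounded (DegRevLexLT rank) := by
  refine Subrelation.wf (r := InvImage (· < ·) fun b => {a | DegRevLexLT rank a b}.ncard) ?_
    (InvImage.wf _ wellFounded_lt)
  intro a b hab
  refine Set.ncard_lt_ncard ?_ (finite_setOf rank b)
  exact ⟨fun c hc => DegRevLexLT.trans hr hc hab, fun h => DegRevLexLT.irrefl a (h hab)⟩

end DegRevLexLT

open Classical in
/-- The exponent vectors, linearly ordered by `DegRevLexLT rank`. -/
noncomputable abbrev degRevLexLinearOrder (hr : Function.Injective rank) :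
    LinearOrder (Sym2 (Fin n) →₀ ℕ) :=
  haveI : IsStrictTotalOrder (Sym2 (Fin n) →₀ ℕ) (DegRevLexLT rank) :=
    { trichotomous := fun a b hab hba =>
        ((DegRevLexLT.trichotomous a b).resolve_left hab).resolve_right hba
      irrefl := DegRevLexLT.irrefl
      trans := fun _ _ _ => DegRevLexLT.trans hr }
  linearOrderOfSTO (DegRevLexLT rank)

/-- The degree reverse lexicographic order attached to `rank`, as a monomial order. -/
noncomputable def degRevLex (hr : Function.Injective rank) : MonomialOrder (Sym2 (Fin n)) where
  syn := Sym2 (Fin n) →₀ ℕ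
  linearOrderSyn := degRevLexLinearOrder hr
  isOrderedAddMonoid_syn :=
    @IsOrderedAddMonoid.mk _ _ (degRevLexLinearOrder hr).toPreorder
      (fun a b hab c => hab.imp (congrArg (· + c)) fun h => by
        rw [add_comm a, add_comm b]; exact h.add_left c)
      fun a b hab c => hab.imp (congrArg (c + ·)) fun h => h.add_left c
  toSyn := AddEquiv.refl _
  toSyn_monotone := fun a b hab => hab.eq_or_lt.imp id DegRevLexLT.of_lt
  wellFoundedLT_syn := ⟨DegRevLexLT.wellFounded hr⟩

theorem degRevLex_lt_iff (hr : Function.Injective rank) :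
    (degRevLex hr).toSyn a < (degRevLex hr).toSyn b ↔ DegRevLexLT rank a b :=
  Iff.rfl

variable {K : Type*} [Field K] {f : MvPolynomial (Sym2 (Fin n)) K}

theorem isLeadingMonomial_iff (hr : Function.Injective rank) :
    IsLeadingMonomial rank f a ↔ f ≠ 0 ∧ (degRevLex hr).degree f = a := by
  constructor
  · rintro ⟨ha, hlt⟩
    have hf : f ≠ 0 := by rintro rfl; exact absurd ha (by simp)
    refine ⟨hf, ?_⟩
    by_contra hne
    exact (hlt _ ((degRevLex hr).degree_mem_support hf) hne |> (degRevLex_lt_iff hr).2).not_ge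
      ((degRevLex hr).le_degree ha)
  · rintro ⟨hf, rfl⟩
    refine ⟨(degRevLex hr).degree_mem_support hf, fun ν hν hne => (degRevLex_lt_iff hr).1 ?_⟩
    exact ((degRevLex hr).le_degree hν).lt_of_ne fun h => hne ((degRevLex hr).toSyn.injective h)

theorem exists_le_degree (hr : Function.Injective rank)
    {I : Ideal (MvPolynomial (Sym2 (Fin n)) K)} {G : Set (Sym2 (Fin n) →₀ ℕ)}
    (hG : ∀ m ∈ G, ∃ f ∈ I, IsLeadingMonomial rank f m)
    (hI : ∀ f ∈ I, f ≠ 0 → ∃ a ∈ f.support, ∃ m ∈ G, m ≤ a) (hfI : f ∈ I) (hf : f ≠ 0) :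
    ∃ m ∈ G, m ≤ (degRevLex hr).degree f := by
  set ord := degRevLex hr
  let B : Set (MvPolynomial (Sym2 (Fin n)) K) := {b | b ∈ I ∧ b ≠ 0 ∧ ord.degree b ∈ G}
  obtain ⟨g, r, hfr, hdeg, hr_irred⟩ := ord.div_set (B := B)
    (fun b hb => isUnit_iff_ne_zero.2 (ord.leadingCoeff_ne_zero_iff.2 hb.2.1)) f
  have hsum : Finsupp.linearCombination _ (fun b : B => (b : MvPolynomial _ K)) g ∈ I :=
    I.sum_mem fun b _ => I.mul_mem_left _ b.2.1
  have hr_zero : r = 0 := by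
    by_contra hne
    have hrI : r ∈ I := by rwa [hfr, I.add_mem_iff_right hsum] at hfI
    obtain ⟨a, ha, m, hm, hle⟩ := hI r hrI hne
    obtain ⟨b, hbI, hb⟩ := hG m hm
    obtain ⟨hb0, rfl⟩ := (isLeadingMonomial_iff hr).1 hb
    exact hr_irred a ha b ⟨hbI, hb0, hm⟩ hle
  rw [hr_zero, add_zero, Finsupp.linearCombination_apply] at hfr
  have hlead : ord.degree f ∈ (g.sum fun b h => h • (b : MvPolynomial _ K)).support := by
    rw [← hfr]
    exact ord.degree_mem_support hf
  classical
  obtain ⟨b, -, hb⟩ := Finset.mem_biUnion.1 (support_sum hlead)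
  replace hb : ord.degree f ∈ ((b : MvPolynomial _ K) * g b).support := by
    simpa only [smul_eq_mul, mul_comm] using hb
  have hbg : (b : MvPolynomial _ K) * g b ≠ 0 := by rintro h; simp [h] at hb
  have heq : ord.degree f = ord.degree ((b : MvPolynomial _ K) * g b) :=
    ord.toSyn.injective ((ord.le_degree hb).antisymm (hdeg b))
  refine ⟨ord.degree (b : MvPolynomial (Sym2 (Fin n)) K), b.2.2.2, ?_⟩
  rw [heq, ord.degree_mul (left_ne_zero_of_mul hbg) (right_ne_zero_of_mul hbg)]
  exact le_self_add

theorem initialIdeal_eq_span_of_support (hr : Function.Injective rank)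
    {I : Ideal (MvPolynomial (Sym2 (Fin n)) K)} {G : Set (Sym2 (Fin n) →₀ ℕ)}
    (hG : ∀ m ∈ G, ∃ f ∈ I, IsLeadingMonomial rank f m)
    (hI : ∀ f ∈ I, f ≠ 0 → ∃ a ∈ f.support, ∃ m ∈ G, m ≤ a) :
    initialIdeal rank I = Ideal.span ((fun m => monomial m (1 : K)) '' G) := by
  let ord := degRevLex hr
  apply le_antisymm <;> rw [initialIdeal, Ideal.span_le]
  · rintro _ ⟨f, hfI, hf, μ, hμ, rfl⟩
    obtain ⟨m, hm, hle⟩ : ∃ m ∈ G, m ≤ ord.degree f := exists_le_degree hr hG hI hfI hf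
    rw [SetLike.mem_coe, mem_ideal_span_monomial_image]
    intro x hx
    obtain rfl := Finset.mem_singleton.1 (support_monomial_subset hx)
    exact ⟨m, hm, hle.trans_eq ((isLeadingMonomial_iff hr).1 hμ).2⟩
  · rintro _ ⟨m, hm, rfl⟩
    obtain ⟨f, hfI, hf⟩ := hG m hm
    exact Ideal.subset_span ⟨f, hfI, ((isLeadingMonomial_iff hr).1 hf).1, m, hf, rfl⟩

end DegRevLex

section LeadingForm

open scoped PowerSeries

variable {σ R L : Type*} [CommRing R] [CommRing L] {ω : σ → ℕ} {F : σ → L⟦X⟧} {χ : σ → L}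

theorem coeff_finsuppProd_pow (hF : ∀ v, PowerSeries.X ^ (ω v + 1) ∣
      F v - PowerSeries.X ^ ω v * PowerSeries.C (χ v)) {ν : σ →₀ ℕ} {m : ℕ}
    (hm : m ≤ Finsupp.weight ω ν) :
    PowerSeries.coeff m (ν.prod fun v e => F v ^ e) =
      if Finsupp.weight ω ν = m then ν.prod fun v e => χ v ^ e else 0 := by
  choose h hh using hF
  have hfactor (v : σ) :
      F v = PowerSeries.X ^ ω v * (PowerSeries.C (χ v) + PowerSeries.X * h v) := by
    rw [mul_add, ← mul_assoc, ← pow_succ, ← hh]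
    ring
  have hprod : (ν.prod fun v e => F v ^ e) = PowerSeries.X ^ Finsupp.weight ω ν *
      ν.prod fun v e => (PowerSeries.C (χ v) + PowerSeries.X * h v) ^ e := by
    rw [Finsupp.weight_apply, Finsupp.sum, ← Finset.prod_pow_eq_pow_sum, Finsupp.prod,
      Finsupp.prod, ← Finset.prod_mul_distrib]
    refine Finset.prod_congr rfl fun v _ => ?_
    rw [hfactor v, mul_pow, ← pow_mul, smul_eq_mul, mul_comm (ω v)]
  rw [hprod, PowerSeries.coeff_X_pow_mul']
  rcases hm.eq_or_lt with rfl | hlt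
  · simp [Finsupp.prod]
  · rw [if_neg hlt.not_ge, if_neg hlt.ne']

theorem coeff_eval₂_eq_eval₂_weightedHomogeneousComponent (hF : ∀ v, PowerSeries.X ^ (ω v + 1) ∣
      F v - PowerSeries.X ^ ω v * PowerSeries.C (χ v)) (φ : R →+* L) {f : MvPolynomial σ R}
    {m : ℕ} (hm : ∀ ν ∈ f.support, m ≤ Finsupp.weight ω ν) :
    PowerSeries.coeff m (eval₂ (PowerSeries.C.comp φ) F f) =
      eval₂ φ χ (weightedHomogeneousComponent ω m f) := by
  classical
  rw [weightedHomogeneousComponent_apply, eval₂_sum, Finset.sum_filter, eval₂_eq, map_sum]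
  refine Finset.sum_congr rfl fun ν hν => ?_
  have hcoeff := coeff_finsuppProd_pow hF (hm ν hν)
  rw [Finsupp.prod] at hcoeff
  rw [RingHom.comp_apply, PowerSeries.coeff_C_mul, hcoeff, mul_ite, mul_zero, eval₂_monomial]

open Classical in
theorem exists_mem_of_eval₂_eq_zero {K : Type*} [CommRing K] {Z : Set σ}
    {φ : MvPolynomial σ K →+* L} (hφ : Function.Injective φ)
    (hF : ∀ v, PowerSeries.X ^ (ω v + 1) ∣
      F v - PowerSeries.X ^ ω v * PowerSeries.C (if v ∈ Z then 0 else φ (X v)))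
    {f : MvPolynomial σ K} (hf : eval₂ (PowerSeries.C.comp (φ.comp C)) F f = 0)
    {μ : σ →₀ ℕ} (hμ : μ ∈ f.support)
    (hmin : ∀ ν ∈ f.support, Finsupp.weight ω μ ≤ Finsupp.weight ω ν) : ∃ v ∈ Z, μ v ≠ 0 := by
  have hkill (p : MvPolynomial σ K) :
      eval₂ (φ.comp C) (fun v => if v ∈ Z then 0 else φ (X v)) p = φ (killVars Z p) := by
    rw [killVars, aeval_def, ← RingHom.coe_coe φ, hom_eval₂]
    congr 1
    funext v
    split_ifs <;> simp
  have hzero := coeff_eval₂_eq_eval₂_weightedHomogeneousComponent hF (φ.comp C) hmin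
  rw [hf, map_zero, hkill, eq_comm, map_eq_zero_iff φ hφ] at hzero
  by_contra! hcon
  have hcoeff := coeff_killVars hcon (weightedHomogeneousComponent ω (Finsupp.weight ω μ) f)
  rw [hzero, coeff_zero, coeff_weightedHomogeneousComponent, if_pos rfl] at hcoeff
  exact mem_support_iff.1 hμ hcoeff.symm

end LeadingForm

section SchurCompletion

open Matrix

variable {ι O : Type*} [CommRing O]

theorem det_submatrix_mul_eq_zero [IsDomain O] {κ η ζ : Type*} [Fintype κ] [Fintype η]
    [DecidableEq η] (A : Matrix ι κ O) (B : Matrix κ ζ O) (a : η → ι) (b : η → ζ)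
    (hcard : Fintype.card κ < Fintype.card η) : ((A * B).submatrix a b).det = 0 := by
  by_contra hdet
  have hrows : LinearIndependent O ((vecMulLinear (B.submatrix id b)) ∘ (A.submatrix a id).row) :=
    linearIndependent_rows_of_det_ne_zero hdet
  have hle := (LinearIndependent.of_comp _ hrows).fintype_card_le_finrank
  rw [Module.finrank_fintype_fun_eq_card] at hle
  exact hcard.not_ge hle

variable (H : Matrix ι ι O) {τ : Type*} [Fintype τ] [DecidableEq τ] (j : τ → ι)

/-- The matrix of rank at most `#τ` that agrees with `H` on the rows and columns in the range of
`j`, provided that `H.submatrix j j` is invertible. -/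
noncomputable def schurCompletion : Matrix ι ι O :=
  H.submatrix id j * (H.submatrix j j)⁻¹ *
    H.submatrix j id

variable {H j}

theorem schurCompletion_isSymm (hH : H.IsSymm) : (schurCompletion H j).IsSymm := by
  rw [IsSymm, schurCompletion, transpose_mul, transpose_mul, transpose_nonsing_inv,
    transpose_submatrix, transpose_submatrix, transpose_submatrix, hH.eq, Matrix.mul_assoc]

theorem det_submatrix_schurCompletion_eq_zero [IsDomain O] {η : Type*} [Fintype η]
    [DecidableEq η] (a b : η → ι) (hcard : Fintype.card τ < Fintype.card η) :
    ((schurCompletion H j).submatrix a b).det = 0 := by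
  rw [schurCompletion, Matrix.mul_assoc]
  exact det_submatrix_mul_eq_zero _ _ a b hcard

theorem schurCompletion_apply_left
    (hj : IsUnit (H.submatrix j j).det) (t : τ) (z : ι) :
    schurCompletion H j (j t) z = H (j t) z := by
  have hrow : (schurCompletion H j).submatrix j id = H.submatrix j id := by
    rw [schurCompletion, submatrix_mul _ _ _ id id Function.bijective_id,
      submatrix_mul _ _ _ id id Function.bijective_id, submatrix_submatrix, submatrix_id_id]
    simp only [Function.id_comp, Function.comp_id, mul_nonsing_inv _ hj, Matrix.one_mul,
      submatrix_id_id]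
  exact congrFun₂ hrow t z

theorem mul_dvd_dotProduct_schurCompletion [Fintype ι] {p q : O} {k l : ι → O}
    (hk : ∀ t, p ∣ (k ᵥ* H) (j t)) (hl : ∀ t, q ∣ (H *ᵥ l) (j t)) :
    p * q ∣ k ⬝ᵥ (schurCompletion H j *ᵥ l) := by
  have hassoc : k ⬝ᵥ (schurCompletion H j *ᵥ l) =
      (k ᵥ* H.submatrix id j) ⬝ᵥ
        ((H.submatrix j j)⁻¹ *ᵥ (H.submatrix j id *ᵥ l)) := by
    rw [schurCompletion, ← mulVec_mulVec, ← mulVec_mulVec, dotProduct_mulVec]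
  rw [hassoc]
  refine Finset.dvd_sum fun t _ => mul_dvd_mul (hk t) ?_
  exact Finset.dvd_sum fun u _ => (hl u).mul_left _

end SchurCompletion

section TreePartition

open scoped PowerSeries
open Matrix

open Classical in
/-- The weight of the variables in the degeneration argument: `0` at the diagonal pairs, `1` at the
edges of `G` and `W` at the remaining pairs. -/
noncomputable def edgeWeight {ι : Type*} (G : SimpleGraph ι) (W : ℕ) (v : Sym2 ι) : ℕ :=
  if v.IsDiag then 0 else if v ∈ G.edgeSet then 1 else W

section edgeWeight

variable {ι : Type*} {G : SimpleGraph ι} {W : ℕ} {x z : ι}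

theorem edgeWeight_diag : edgeWeight G W s(x, x) = 0 :=
  if_pos rfl

theorem edgeWeight_of_adj (h : G.Adj x z) : edgeWeight G W s(x, z) = 1 := by
  rw [edgeWeight, if_neg (mt Sym2.mk_isDiag_iff.1 h.ne), if_pos (G.mem_edgeSet.2 h)]

theorem edgeWeight_of_not_adj (hxz : x ≠ z) (h : ¬ G.Adj x z) : edgeWeight G W s(x, z) = W := by
  rw [edgeWeight, if_neg (mt Sym2.mk_isDiag_iff.1 hxz), if_neg (mt G.mem_edgeSet.1 h)]

theorem edgeWeight_pos [NeZero W] (h : x ≠ z) : 0 < edgeWeight G W s(x, z) := by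
  by_cases hadj : G.Adj x z
  · rw [edgeWeight_of_adj hadj]
    exact one_pos
  · rw [edgeWeight_of_not_adj h hadj]
    exact Nat.pos_of_neZero W

end edgeWeight

/-- A partition of the vertices of `G` into induced rooted trees, any two of which are joined by
exactly one edge. The vertex `root x` is the root of the tree containing `x`; the value of `parent`
at a root is irrelevant. -/
structure TreePartition {ι : Type*} (G : SimpleGraph ι) where
  root : ι → ι
  parent : ι → ι
  depth : ι → ℕ
  root_root : ∀ x, root (root x) = root x
  depth_eq_zero : ∀ {x}, root x = x → depth x = 0
  depth_parent : ∀ {x}, root x ≠ x → depth (parent x) + 1 = depth x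
  root_parent : ∀ {x}, root x ≠ x → root (parent x) = root x
  adj_parent : ∀ {x}, root x ≠ x → G.Adj x (parent x)
  parent_of_adj : ∀ {x z}, G.Adj x z → root x = root z →
    (root x ≠ x ∧ parent x = z) ∨ (root z ≠ z ∧ parent z = x)
  existsUnique_edge : ∀ {x z}, root x ≠ root z →
    ∃! e : ι × ι, root e.1 = root x ∧ root e.2 = root z ∧ G.Adj e.1 e.2

namespace TreePartition

variable {ι L : Type*} {G : SimpleGraph ι} (P : TreePartition G)

/-- The vertices that are not roots. -/
abbrev Nonroot : Type _ := {x // P.root x ≠ x}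

/-- The diagonal pairs at the roots together with the edges joining different trees. -/
def boundary : Set (Sym2 ι) :=
  {v | (∃ x, P.root x = x ∧ v = s(x, x)) ∨ ∃ x z, G.Adj x z ∧ P.root x ≠ P.root z ∧ v = s(x, z)}

variable {P}

theorem diag_mem_boundary_iff {x : ι} : s(x, x) ∈ P.boundary ↔ P.root x = x := by
  constructor
  · rintro (⟨r, hr, h⟩ | ⟨p, q, hpq, -, h⟩) <;>
      rcases Sym2.eq_iff.1 h with ⟨rfl, hx⟩ | ⟨rfl, hx⟩
    · exact hr
    · exact hr
    · exact absurd hx hpq.ne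
    · exact absurd hx hpq.ne'
  · exact fun hx => .inl ⟨x, hx, rfl⟩

theorem mem_boundary_iff_of_adj {x z : ι} (hadj : G.Adj x z) :
    s(x, z) ∈ P.boundary ↔ P.root x ≠ P.root z := by
  constructor
  · rintro (⟨r, -, h⟩ | ⟨p, q, -, hpq, h⟩) <;> rcases Sym2.eq_iff.1 h with ⟨rfl, rfl⟩ | ⟨rfl, rfl⟩
    · exact absurd rfl hadj.ne
    · exact absurd rfl hadj.ne
    · exact hpq
    · exact hpq.symm
  · exact fun hroot => .inr ⟨x, z, hadj, hroot, rfl⟩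

theorem notMem_boundary_of_not_adj {x z : ι} (hxz : x ≠ z) (hadj : ¬ G.Adj x z) :
    s(x, z) ∉ P.boundary := by
  rintro (⟨r, -, h⟩ | ⟨p, q, hpq, -, h⟩) <;> rcases Sym2.eq_iff.1 h with ⟨rfl, rfl⟩ | ⟨rfl, rfl⟩
  · exact hxz rfl
  · exact hxz rfl
  · exact hadj hpq
  · exact hadj hpq.symm

theorem parent_ne {x : ι} (hx : P.root x ≠ x) : P.parent x ≠ x := fun h => by
  have := P.depth_parent hx
  rw [h] at this
  omega

theorem parentEdge_injective : Function.Injective fun q : P.Nonroot => s(q.1, P.parent q) := by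
  intro q r h
  rcases Sym2.eq_iff.1 h with ⟨h, -⟩ | ⟨h₁, h₂⟩
  · exact Subtype.ext h
  · have hq := P.depth_parent q.2
    have hr := P.depth_parent r.2
    rw [h₂] at hq
    rw [← h₁] at hr
    omega

theorem exists_parentEdge_iff {x z : ι} :
    (∃ q : P.Nonroot, s(x, z) = s(q.1, P.parent q)) ↔ G.Adj x z ∧ P.root x = P.root z := by
  constructor
  · rintro ⟨q, hq⟩
    rcases Sym2.eq_iff.1 hq with ⟨rfl, rfl⟩ | ⟨rfl, rfl⟩
    · exact ⟨P.adj_parent q.2, (P.root_parent q.2).symm⟩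
    · exact ⟨(P.adj_parent q.2).symm, P.root_parent q.2⟩
  · rintro ⟨hadj, hroot⟩
    rcases P.parent_of_adj hadj hroot with ⟨hx, rfl⟩ | ⟨hz, rfl⟩
    · exact ⟨⟨x, hx⟩, rfl⟩
    · exact ⟨⟨z, hz⟩, Sym2.eq_swap⟩

variable (P) [Field L] (y : Sym2 ι → L)

/-- The coefficients `c` determined by `c r = 1` at the roots and
`y_{qq} c_q + y_{q, parent q} c_{parent q} = 0` elsewhere. -/
noncomputable def kernelCoeff (x : ι) : L :=
  ∏ m ∈ Finset.range (P.depth x), -(y s(P.parent^[m] x, P.parent^[m + 1] x) /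
    y s(P.parent^[m] x, P.parent^[m] x))

/-- The vector `∑_x t ^ depth x * c_x * e_x` over the vertices `x` of the tree with root `r`. -/
noncomputable def kernelVec [DecidableEq ι] (r : ι) : ι → L⟦X⟧ := fun x =>
  if P.root x = r then PowerSeries.X ^ P.depth x * PowerSeries.C (P.kernelCoeff y x) else 0

/-- The vector `y_{qq} e_q + t y_{q, parent q} e_{parent q}`. -/
noncomputable def starVec [DecidableEq ι] (q : ι) : ι → L⟦X⟧ :=
  Pi.single q (PowerSeries.C (y s(q, q))) +
    Pi.single (P.parent q) (PowerSeries.X * PowerSeries.C (y s(q, P.parent q)))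

variable {P y}

theorem kernelCoeff_ne_zero (hy : ∀ v, y v ≠ 0) (x : ι) : P.kernelCoeff y x ≠ 0 :=
  Finset.prod_ne_zero_iff.2 fun _ _ => neg_ne_zero.2 (div_ne_zero (hy _) (hy _))

theorem kernelCoeff_root {x : ι} (hx : P.root x = x) : P.kernelCoeff y x = 1 := by
  rw [kernelCoeff, P.depth_eq_zero hx, Finset.range_zero, Finset.prod_empty]

theorem kernelCoeff_nonroot (hy : ∀ v, y v ≠ 0) {q : ι} (hq : P.root q ≠ q) :
    y s(q, q) * P.kernelCoeff y q + y s(q, P.parent q) * P.kernelCoeff y (P.parent q) = 0 := by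
  have hstep : P.kernelCoeff y q =
      P.kernelCoeff y (P.parent q) * -(y s(q, P.parent q) / y s(q, q)) := by
    rw [kernelCoeff, ← P.depth_parent hq, Finset.prod_range_succ']
    rfl
  rw [hstep]
  field_simp [hy s(q, q)]
  ring

variable (P y)

open Classical in
/-- The part of the degeneration at the places outside the trees. A pair joined by an edge carries
the entry for which `k_rᵀ R k_u` loses its lowest term for any two roots `r` and `u`, where
`k = P.kernelVec y` and `R` is this matrix. -/
noncomputable def correction (W : ℕ) : Matrix ι ι L⟦X⟧ := Matrix.of fun x z =>
  if G.Adj x z then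
    if P.root x = P.root z then 0
    else -(PowerSeries.X ^ (W - P.depth x - P.depth z) * PowerSeries.C
      (y s(P.root x, P.root z) / (P.kernelCoeff y x * P.kernelCoeff y z)))
  else if x = z then 0 else PowerSeries.X ^ W * PowerSeries.C (y s(x, z))

variable {P y} {W : ℕ}

theorem correction_isSymm : (P.correction y W).IsSymm := IsSymm.ext fun x z => by
  simp only [correction, of_apply, Sym2.eq_swap (a := z), Sym2.eq_swap (a := P.root z),
    mul_comm (P.kernelCoeff y z), Nat.sub_right_comm W (P.depth z)]
  by_cases hadj : G.Adj x z
  · by_cases hroot : P.root x = P.root z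
    · simp only [hadj, hadj.symm, hroot, if_true]
    · simp only [hadj, hadj.symm, hroot, Ne.symm hroot, if_true, if_false]
  · by_cases hxz : x = z
    · rw [hxz]
    · simp only [hadj, mt SimpleGraph.Adj.symm hadj, hxz, Ne.symm hxz, if_false]

theorem correction_apply_of_adj {x z : ι} (h : G.Adj x z) (hroot : P.root x ≠ P.root z) :
    P.correction y W x z = -(PowerSeries.X ^ (W - P.depth x - P.depth z) * PowerSeries.C
      (y s(P.root x, P.root z) / (P.kernelCoeff y x * P.kernelCoeff y z))) := by
  rw [correction, of_apply, if_pos h, if_neg hroot]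

theorem correction_apply_of_not_adj {x z : ι} (h : ¬ G.Adj x z) (hxz : x ≠ z) :
    P.correction y W x z = PowerSeries.X ^ W * PowerSeries.C (y s(x, z)) := by
  rw [correction, of_apply, if_neg h, if_neg hxz]

theorem X_pow_dvd_correction (hW : ∀ x, 4 * P.depth x + 2 ≤ W) (x z : ι) :
    PowerSeries.X ^ (W / 2 + 1) ∣ P.correction y W x z := by
  have hx := hW x
  have hz := hW z
  rw [correction, of_apply]
  split_ifs
  · exact dvd_zero _
  · exact dvd_neg.2 ((pow_dvd_pow _ (by omega)).mul_right _)
  · exact dvd_zero _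
  · exact (pow_dvd_pow _ (by omega)).mul_right _

theorem X_pow_dvd_correction_mulVec [Fintype ι] (hW : ∀ x, 4 * P.depth x + 2 ≤ W)
    (k : ι → L⟦X⟧) (x : ι) : PowerSeries.X ^ (W / 2 + 1) ∣ (P.correction y W *ᵥ k) x :=
  Finset.dvd_sum fun z _ => (X_pow_dvd_correction hW x z).mul_right _

variable [DecidableEq ι]

theorem kernelVec_root {r x : ι} (hx : P.root x = x) :
    P.kernelVec y r x = (Pi.single r 1 : ι → L⟦X⟧) x := by
  rw [kernelVec, hx, P.depth_eq_zero hx, kernelCoeff_root hx, Pi.single_apply]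
  simp

theorem kernelVec_of_root_ne {r x : ι} (hx : P.root x ≠ r) : P.kernelVec y r x = 0 :=
  if_neg hx

theorem starVec_mul_starVec {q x z : ι} (hq : P.root q ≠ q) (hxz : x ≠ z) :
    P.starVec y q x * P.starVec y q z = if s(x, z) = s(q, P.parent q) then
      PowerSeries.C (y s(q, q)) * (PowerSeries.X * PowerSeries.C (y s(x, z))) else 0 := by
  have hpar := parent_ne hq
  split_ifs with h
  · rw [h]
    rcases Sym2.eq_iff.1 h with ⟨rfl, rfl⟩ | ⟨rfl, rfl⟩ <;> simp [starVec, hxz, mul_comm]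
  · simp only [Sym2.eq_iff, not_or, not_and] at h
    rcases eq_or_ne x q with rfl | hx
    · simp [starVec, hxz.symm, h.1 rfl]
    rcases eq_or_ne x (P.parent q) with rfl | hx'
    · simp [starVec, hxz.symm, h.2 rfl]
    · simp [starVec, hx, hx']

theorem X_dvd_starVec {q x : ι} (hx : x ≠ q) : PowerSeries.X ∣ P.starVec y q x := by
  rw [starVec, Pi.add_apply, Pi.single_eq_of_ne hx, zero_add, Pi.single_apply]
  split_ifs
  · exact dvd_mul_right _ _
  · exact dvd_zero _

theorem kernelVec_mul_correction_of_adj (hy : ∀ v, y v ≠ 0) (hW : ∀ x, 4 * P.depth x + 2 ≤ W)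
    {p q : ι} (hadj : G.Adj p q) (hpq : P.root p ≠ P.root q) :
    P.kernelVec y (P.root p) p * (P.correction y W p q * P.kernelVec y (P.root q) q) =
      -(PowerSeries.X ^ W * PowerSeries.C (y s(P.root p, P.root q))) := by
  have hdepth : PowerSeries.X ^ W = (PowerSeries.X ^ P.depth p *
      (PowerSeries.X ^ (W - P.depth p - P.depth q) * PowerSeries.X ^ P.depth q) : L⟦X⟧) := by
    have := hW p
    have := hW q
    rw [← pow_add, ← pow_add]
    congr 1
    omega
  have hc : y s(P.root p, P.root q) = P.kernelCoeff y p *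
      (y s(P.root p, P.root q) / (P.kernelCoeff y p * P.kernelCoeff y q) * P.kernelCoeff y q) := by
    field_simp [kernelCoeff_ne_zero (P := P) hy p, kernelCoeff_ne_zero (P := P) hy q]
  rw [correction_apply_of_adj hadj hpq, kernelVec, kernelVec, if_pos rfl, if_pos rfl, hdepth]
  nth_rw 2 [hc]
  simp only [map_mul]
  ring

theorem X_pow_dvd_kernelVec_mul_correction_of_not_adj {r u p q : ι} (hr : P.root r = r)
    (hu : P.root u = u) (hadj : ¬ G.Adj p q) (hp : P.root p = r) (hq : P.root q = u)
    (hru : r ≠ u) : (PowerSeries.X ^ (W + 1) : L⟦X⟧) ∣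
      P.kernelVec y r p * (P.correction y W p q * P.kernelVec y u q) -
        if p = r ∧ q = u then PowerSeries.X ^ W * PowerSeries.C (y s(r, u)) else 0 := by
  have hpq : p ≠ q := fun h => hru (by rw [← hp, ← hq, h])
  rw [correction_apply_of_not_adj hadj hpq]
  split_ifs with h
  · rw [h.1, h.2, kernelVec_root hr, kernelVec_root hu]
    simp
  · have hpos : 1 ≤ P.depth p + P.depth q := by
      rw [← hp, ← hq, not_and_or] at h
      rcases h with h | h <;> have := P.depth_parent (Ne.symm h) <;> omega
    rw [sub_zero, kernelVec, kernelVec, if_pos hp, if_pos hq]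
    refine (pow_dvd_pow _ (show W + 1 ≤ P.depth p + (W + P.depth q) by omega)).trans
      ⟨PowerSeries.C (P.kernelCoeff y p * (y s(p, q) * P.kernelCoeff y q)), ?_⟩
    simp only [map_mul, pow_add]
    ring

variable [Fintype ι]

theorem starVec_dotProduct_kernelVec (hy : ∀ v, y v ≠ 0) {q : ι} (hq : P.root q ≠ q) (r : ι) :
    P.starVec y q ⬝ᵥ P.kernelVec y r = 0 := by
  rw [starVec, add_dotProduct, single_dotProduct, single_dotProduct, kernelVec, kernelVec,
    P.root_parent hq]
  split_ifs
  · have hc := congrArg (PowerSeries.C (R := L)) (kernelCoeff_nonroot (P := P) hy hq)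
    rw [map_add, map_mul, map_mul, map_zero] at hc
    rw [← P.depth_parent hq]
    linear_combination PowerSeries.X ^ (P.depth (P.parent q) + 1) * hc
  · simp

variable (P y)

/-- The matrix `∑_q y_{qq}⁻¹ b_q b_qᵀ` over the vertices `q` that are not roots, where
`b_q = P.starVec y q`. Modulo higher powers of `t` it has the prescribed entries along the trees. -/
noncomputable def treeMatrix : Matrix ι ι L⟦X⟧ :=
  ∑ q : P.Nonroot, PowerSeries.C (y s(q.1, q.1))⁻¹ • vecMulVec (P.starVec y q) (P.starVec y q)

variable {P y}

theorem treeMatrix_apply (x z : ι) : P.treeMatrix y x z = ∑ q : P.Nonroot,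
    PowerSeries.C (y s(q.1, q.1))⁻¹ * (P.starVec y q x * P.starVec y q z) := by
  simp only [treeMatrix, Matrix.sum_apply, Matrix.smul_apply, vecMulVec_apply, smul_eq_mul]

theorem treeMatrix_isSymm : (P.treeMatrix y).IsSymm :=
  IsSymm.ext fun x z => by simp only [treeMatrix_apply, mul_comm (P.starVec y _ x)]

theorem treeMatrix_mulVec_kernelVec (hy : ∀ v, y v ≠ 0) (r : ι) :
    P.treeMatrix y *ᵥ P.kernelVec y r = 0 := by
  rw [treeMatrix, sum_mulVec]
  refine Finset.sum_eq_zero fun q _ => ?_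
  rw [smul_mulVec, vecMulVec_mulVec, starVec_dotProduct_kernelVec hy q.2]
  simp

open Classical in
theorem treeMatrix_apply_of_ne (hy : ∀ v, y v ≠ 0) {x z : ι} (hxz : x ≠ z) :
    P.treeMatrix y x z = if G.Adj x z ∧ P.root x = P.root z then
      PowerSeries.X * PowerSeries.C (y s(x, z)) else 0 := by
  have hterm (q : P.Nonroot) :
      PowerSeries.C (y s(q.1, q.1))⁻¹ * (P.starVec y q x * P.starVec y q z) =
        if s(x, z) = s(q.1, P.parent q) then PowerSeries.X * PowerSeries.C (y s(x, z)) else 0 := by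
    rw [starVec_mul_starVec q.2 hxz, mul_ite, mul_zero, ← mul_assoc, ← map_mul,
      inv_mul_cancel₀ (hy _), map_one, one_mul]
  simp only [treeMatrix_apply, hterm]
  split_ifs with h
  · obtain ⟨q, hq⟩ := exists_parentEdge_iff.2 h
    rw [Finset.sum_eq_single q (fun r _ hr => if_neg fun h => hr ?_) (by simp), if_pos hq]
    exact parentEdge_injective (h.symm.trans hq)
  · exact Finset.sum_eq_zero fun q _ => if_neg fun hq => h (exists_parentEdge_iff.1 ⟨q, hq⟩)

theorem X_dvd_treeMatrix_diag (hy : ∀ v, y v ≠ 0) (x : ι) : PowerSeries.X ∣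
    P.treeMatrix y x x - PowerSeries.C (if P.root x = x then 0 else y s(x, x)) := by
  have hdvd (q : P.Nonroot) (hq : x ≠ q) : PowerSeries.X ∣
      PowerSeries.C (y s(q.1, q.1))⁻¹ * (P.starVec y q x * P.starVec y q x) :=
    ((X_dvd_starVec hq).mul_left _).mul_left _
  rw [treeMatrix_apply]
  split_ifs with hx
  · rw [map_zero, sub_zero]
    exact Finset.dvd_sum fun q _ => hdvd q fun h => q.2 (h ▸ hx)
  · have hself : P.starVec y x x = PowerSeries.C (y s(x, x)) := by
      simp [starVec, (parent_ne hx).symm]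
    rw [← Finset.add_sum_erase _ _ (Finset.mem_univ (⟨x, hx⟩ : P.Nonroot)), hself, ← mul_assoc,
      ← map_mul, inv_mul_cancel₀ (hy _), map_one, one_mul, add_sub_cancel_left]
    exact Finset.dvd_sum fun q hq => hdvd q fun h => Finset.ne_of_mem_erase hq (Subtype.ext h.symm)

theorem X_pow_dvd_kernelVec_dotProduct_correction (hy : ∀ v, y v ≠ 0)
    (hW : ∀ x, 4 * P.depth x + 2 ≤ W) {r u : ι} (hr : P.root r = r) (hu : P.root u = u)
    (hru : r ≠ u) (hadj : ¬ G.Adj r u) : (PowerSeries.X ^ (W + 1) : L⟦X⟧) ∣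
      P.kernelVec y r ⬝ᵥ (P.correction y W *ᵥ P.kernelVec y u) := by
  have hroots : P.root r ≠ P.root u := by rwa [hr, hu]
  obtain ⟨e₀, ⟨he₁, he₂, he⟩, huniq⟩ := P.existsUnique_edge hroots
  rw [hr] at he₁
  rw [hu] at he₂
  let A : L⟦X⟧ := PowerSeries.X ^ W * PowerSeries.C (y s(r, u))
  have hterm (e : ι × ι) : (PowerSeries.X ^ (W + 1) : L⟦X⟧) ∣
      P.kernelVec y r e.1 * (P.correction y W e.1 e.2 * P.kernelVec y u e.2) -
        ((if e = (r, u) then A else 0) - if e = e₀ then A else 0) := by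
    by_cases hp : P.root e.1 = r; swap
    · have h₁ : e ≠ (r, u) := fun h => hp (by rw [h, hr])
      have h₂ : e ≠ e₀ := fun h => hp (by rw [h, he₁])
      simp [kernelVec_of_root_ne hp, h₁, h₂]
    by_cases hq : P.root e.2 = u; swap
    · have h₁ : e ≠ (r, u) := fun h => hq (by rw [h, hu])
      have h₂ : e ≠ e₀ := fun h => hq (by rw [h, he₂])
      simp [kernelVec_of_root_ne hq, h₁, h₂]
    by_cases hadj' : G.Adj e.1 e.2
    · obtain rfl : e = e₀ := huniq e ⟨hp.trans hr.symm, hq.trans hu.symm, hadj'⟩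
      have hne : e ≠ (r, u) := fun h => hadj (by rwa [h] at hadj')
      have hmul := kernelVec_mul_correction_of_adj hy hW hadj' (by rwa [hp, hq])
      rw [hp, hq] at hmul
      rw [hmul, if_neg hne, if_pos rfl, zero_sub, sub_self]
      exact dvd_zero _
    · rw [if_neg (show e ≠ e₀ from fun h => hadj' (h ▸ he)), sub_zero]
      simpa only [Prod.ext_iff] using
        X_pow_dvd_kernelVec_mul_correction_of_not_adj hr hu hadj' hp hq hru
  have hsum := Finset.dvd_sum fun e (_ : e ∈ Finset.univ) => hterm e
  rw [Finset.sum_sub_distrib, Finset.sum_sub_distrib, Finset.sum_ite_eq' _ (r, u),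
    Finset.sum_ite_eq' _ e₀, if_pos (Finset.mem_univ _), if_pos (Finset.mem_univ _), sub_self,
    sub_zero, Fintype.sum_prod_type] at hsum
  simpa only [dotProduct, mulVec, Finset.mul_sum] using hsum

theorem isUnit_det_submatrix_treeMatrix_add_correction (hy : ∀ v, y v ≠ 0)
    (hW : ∀ x, 4 * P.depth x + 2 ≤ W) :
    IsUnit ((P.treeMatrix y + P.correction y W).submatrix (Subtype.val : P.Nonroot → ι)
      Subtype.val).det := by
  have hcorr (x z : ι) : PowerSeries.X ∣ P.correction y W x z :=
    (dvd_pow_self _ (Nat.succ_ne_zero _)).trans (X_pow_dvd_correction hW x z)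
  have hconst : ((P.treeMatrix y + P.correction y W).submatrix (Subtype.val : P.Nonroot → ι)
      Subtype.val).map (PowerSeries.constantCoeff (R := L)) =
        diagonal fun q : P.Nonroot => y s(q.1, q.1) := by
    ext q r
    rw [map_apply, submatrix_apply, Matrix.add_apply, map_add,
      PowerSeries.X_dvd_iff.1 (hcorr _ _), add_zero]
    rcases eq_or_ne q r with rfl | hqr
    · have hdiag := PowerSeries.X_dvd_iff.1 (X_dvd_treeMatrix_diag (P := P) hy q.1)
      rw [map_sub, PowerSeries.constantCoeff_C, if_neg q.2, sub_eq_zero] at hdiag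
      rw [hdiag, diagonal_apply_eq]
    · rw [diagonal_apply_ne _ hqr, treeMatrix_apply_of_ne hy (Subtype.coe_ne_coe.2 hqr)]
      split_ifs <;> simp
  rw [PowerSeries.isUnit_iff_constantCoeff, RingHom.map_det, RingHom.mapMatrix_apply, hconst,
    det_diagonal]
  exact (Finset.prod_ne_zero_iff.2 fun _ _ => hy _).isUnit

variable (P y W)

/-- A symmetric matrix of rank at most the number of vertices that are not roots, whose entries
have prescribed lowest terms away from `P.boundary`. -/
noncomputable def degeneration : Matrix ι ι L⟦X⟧ :=
  schurCompletion (P.treeMatrix y + P.correction y W) (Subtype.val : P.Nonroot → ι)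

variable {P y W}

theorem degeneration_isSymm : (P.degeneration y W).IsSymm :=
  schurCompletion_isSymm (treeMatrix_isSymm.add correction_isSymm)

theorem degeneration_apply_of_root_ne (hy : ∀ v, y v ≠ 0) (hW : ∀ x, 4 * P.depth x + 2 ≤ W)
    {x : ι} (hx : P.root x ≠ x) (z : ι) :
    P.degeneration y W x z = P.treeMatrix y x z + P.correction y W x z :=
  schurCompletion_apply_left (isUnit_det_submatrix_treeMatrix_add_correction hy hW) ⟨x, hx⟩ z

theorem X_pow_dvd_kernelVec_dotProduct_degeneration (hy : ∀ v, y v ≠ 0)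
    (hW : ∀ x, 4 * P.depth x + 2 ≤ W) (r u : ι) : (PowerSeries.X ^ (W + 1) : L⟦X⟧) ∣
      P.kernelVec y r ⬝ᵥ (P.degeneration y W *ᵥ P.kernelVec y u) := by
  have hdvd (s x : ι) : PowerSeries.X ^ (W / 2 + 1) ∣
      ((P.treeMatrix y + P.correction y W) *ᵥ P.kernelVec y s) x := by
    rw [add_mulVec, treeMatrix_mulVec_kernelVec hy, zero_add]
    exact X_pow_dvd_correction_mulVec hW _ x
  have hsymm : (P.treeMatrix y + P.correction y W)ᵀ = P.treeMatrix y + P.correction y W :=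
    (treeMatrix_isSymm.add correction_isSymm).eq
  have hmul : (PowerSeries.X ^ (W / 2 + 1) * PowerSeries.X ^ (W / 2 + 1) : L⟦X⟧) ∣
      P.kernelVec y r ⬝ᵥ (P.degeneration y W *ᵥ P.kernelVec y u) :=
    mul_dvd_dotProduct_schurCompletion
      (fun t => by rw [← mulVec_transpose, hsymm]; exact hdvd r t) (fun t => hdvd u t)
  rw [← pow_add] at hmul
  exact (pow_dvd_pow _ (by omega)).trans hmul

theorem kernelVec_dotProduct_degeneration (hy : ∀ v, y v ≠ 0) (hW : ∀ x, 4 * P.depth x + 2 ≤ W)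
    {r u : ι} (hr : P.root r = r) (hu : P.root u = u) :
    P.kernelVec y r ⬝ᵥ (P.degeneration y W *ᵥ P.kernelVec y u) =
      P.kernelVec y r ⬝ᵥ (P.correction y W *ᵥ P.kernelVec y u) +
        (P.degeneration y W r u - (P.treeMatrix y r u + P.correction y W r u)) := by
  let E := P.degeneration y W - (P.treeMatrix y + P.correction y W)
  have hE {x z : ι} (h : P.root x ≠ x ∨ P.root z ≠ z) : E x z = 0 := by
    rcases h with h | h
    · exact sub_eq_zero.2 (degeneration_apply_of_root_ne hy hW h z)
    · have hsymm : E.IsSymm := degeneration_isSymm.sub (treeMatrix_isSymm.add correction_isSymm)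
      rw [← hsymm.apply]
      exact sub_eq_zero.2 (degeneration_apply_of_root_ne hy hW h x)
  have hmulVec (x : ι) : (E *ᵥ P.kernelVec y u) x = E x u := by
    rw [mulVec, dotProduct, Finset.sum_eq_single u, kernelVec_root hu, Pi.single_eq_same, mul_one]
    · intro z _ hz
      by_cases hz' : P.root z = z
      · rw [kernelVec_root hz', Pi.single_eq_of_ne hz, mul_zero]
      · rw [hE (.inr hz'), zero_mul]
    · simp
  have hdot : P.kernelVec y r ⬝ᵥ (E *ᵥ P.kernelVec y u) = E r u := by
    rw [dotProduct, Finset.sum_eq_single r, kernelVec_root hr, Pi.single_eq_same, one_mul, hmulVec]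
    · intro x _ hx
      by_cases hx' : P.root x = x
      · rw [kernelVec_root hx', Pi.single_eq_of_ne hx, zero_mul]
      · rw [hmulVec, hE (.inl hx'), mul_zero]
    · simp
  have hsplit : P.degeneration y W = (P.treeMatrix y + P.correction y W) + E := by
    rw [add_sub_cancel]
  rw [hsplit, add_mulVec, dotProduct_add, hdot, add_mulVec, treeMatrix_mulVec_kernelVec hy,
    zero_add]
  simp only [Matrix.add_apply, add_sub_cancel_left]

theorem X_sq_dvd_degeneration_sub_treeMatrix (hy : ∀ v, y v ≠ 0)
    (hW : ∀ x, 4 * P.depth x + 2 ≤ W) (x z : ι) :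
    (PowerSeries.X ^ 2 : L⟦X⟧) ∣ P.degeneration y W x z - P.treeMatrix y x z := by
  have hW2 : 2 ≤ W := le_of_add_le_right (hW x)
  have hhalf : (PowerSeries.X ^ 2 : L⟦X⟧) ∣ PowerSeries.X ^ (W / 2 + 1) := pow_dvd_pow _ (by omega)
  have hcorr := hhalf.trans (X_pow_dvd_correction (P := P) (y := y) hW x z)
  by_cases hx : P.root x = x; swap
  · rwa [degeneration_apply_of_root_ne hy hW hx, add_sub_cancel_left]
  by_cases hz : P.root z = z; swap
  · rwa [← degeneration_isSymm.apply, degeneration_apply_of_root_ne hy hW hz,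
      treeMatrix_isSymm.apply, correction_isSymm.apply, add_sub_cancel_left]
  have hdeg := X_pow_dvd_kernelVec_dotProduct_degeneration (P := P) hy hW x z
  rw [kernelVec_dotProduct_degeneration hy hW hx hz] at hdeg
  have hdot : (PowerSeries.X ^ 2 : L⟦X⟧) ∣
      P.kernelVec y x ⬝ᵥ (P.correction y W *ᵥ P.kernelVec y z) :=
    Finset.dvd_sum fun p _ => (hhalf.trans (X_pow_dvd_correction_mulVec hW _ p)).mul_left _
  have hsub := (dvd_add_right hdot).1 ((pow_dvd_pow _ (by omega)).trans hdeg)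
  rw [← sub_sub] at hsub
  exact (dvd_sub_left hcorr).1 hsub

theorem X_pow_dvd_degeneration_of_not_adj (hy : ∀ v, y v ≠ 0)
    (hW : ∀ x, 4 * P.depth x + 2 ≤ W) {x z : ι} (hxz : x ≠ z) (hadj : ¬ G.Adj x z) :
    (PowerSeries.X ^ (W + 1) : L⟦X⟧) ∣
      P.degeneration y W x z - PowerSeries.X ^ W * PowerSeries.C (y s(x, z)) := by
  have htree : P.treeMatrix y x z = 0 := by
    rw [treeMatrix_apply_of_ne hy hxz, if_neg fun h => hadj h.1]
  rw [← correction_apply_of_not_adj (P := P) hadj hxz]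
  by_cases hx : P.root x = x; swap
  · rw [degeneration_apply_of_root_ne hy hW hx, htree, zero_add, sub_self]
    exact dvd_zero _
  by_cases hz : P.root z = z; swap
  · rw [← degeneration_isSymm.apply, degeneration_apply_of_root_ne hy hW hz,
      treeMatrix_isSymm.apply, correction_isSymm.apply, htree, zero_add, sub_self]
    exact dvd_zero _
  have hdeg := X_pow_dvd_kernelVec_dotProduct_degeneration (P := P) hy hW x z
  rwa [kernelVec_dotProduct_degeneration hy hW hx hz, htree, zero_add, dvd_add_right
    (X_pow_dvd_kernelVec_dotProduct_correction hy hW hx hz hxz hadj)] at hdeg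

open Classical in
theorem X_pow_dvd_degeneration_sub (hy : ∀ v, y v ≠ 0) (hW : ∀ x, 4 * P.depth x + 2 ≤ W)
    (x z : ι) : PowerSeries.X ^ (edgeWeight G W s(x, z) + 1) ∣ P.degeneration y W x z -
      PowerSeries.X ^ edgeWeight G W s(x, z) *
        PowerSeries.C (if s(x, z) ∈ P.boundary then 0 else y s(x, z)) := by
  have hsq := X_sq_dvd_degeneration_sub_treeMatrix (P := P) hy hW x z
  rcases eq_or_ne x z with rfl | hxz
  · have hdiag := X_dvd_treeMatrix_diag (P := P) hy x
    rw [edgeWeight_diag, pow_zero, one_mul, zero_add, pow_one]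
    simp only [diag_mem_boundary_iff]
    have hadd := dvd_add ((dvd_pow_self _ two_ne_zero).trans hsq) hdiag
    rwa [sub_add_sub_cancel] at hadd
  by_cases hadj : G.Adj x z
  · rw [edgeWeight_of_adj hadj, pow_one]
    rw [treeMatrix_apply_of_ne hy hxz] at hsq
    simp only [mem_boundary_iff_of_adj hadj]
    by_cases hroot : P.root x = P.root z <;> simpa [hadj, hroot] using hsq
  · rw [edgeWeight_of_not_adj hxz hadj, if_neg (notMem_boundary_of_not_adj hxz hadj)]
    exact X_pow_dvd_degeneration_of_not_adj hy hW hxz hadj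

theorem det_submatrix_degeneration_eq_zero {η : Type*} [Fintype η] [DecidableEq η] (a b : η → ι)
    (hcard : Fintype.card P.Nonroot < Fintype.card η) :
    ((P.degeneration y W).submatrix a b).det = 0 :=
  det_submatrix_schurCompletion_eq_zero a b hcard

end TreePartition
end TreePartition

section InitialForm

variable {K : Type*} [Field K] {n s W : ℕ} {G : SimpleGraph (Fin n)}

theorem eval₂_eq_zero_of_mem_minorsIdeal {R : Type*} [CommRing R] (ψ : K →+* R)
    (M : Sym2 (Fin n) → R)
    (hM : ∀ a b : Fin s → Fin n, (Matrix.of fun k l => M s(a k, b l)).det = 0)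
    {f : MvPolynomial (Sym2 (Fin n)) K} (hf : f ∈ minorsIdeal K n s) : eval₂ ψ M f = 0 := by
  have hle : minorsIdeal K n s ≤ RingHom.ker (eval₂Hom ψ M) := by
    refine Ideal.span_le.2 ?_
    rintro _ ⟨a, b, -, -, rfl⟩
    rw [SetLike.mem_coe, RingHom.mem_ker, symMinor, RingHom.map_det, ← hM a b]
    congr 1
    ext k l
    simp
  exact hle hf

theorem TreePartition.exists_mem_boundary_of_mem_minorsIdeal (P : TreePartition G)
    (hW : ∀ x, 4 * P.depth x + 2 ≤ W) (hs : Fintype.card P.Nonroot < s)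
    {f : MvPolynomial (Sym2 (Fin n)) K} (hf : f ∈ minorsIdeal K n s) {μ : Sym2 (Fin n) →₀ ℕ}
    (hμ : μ ∈ f.support) (hmin : ∀ ν ∈ f.support,
      Finsupp.weight (edgeWeight G W) μ ≤ Finsupp.weight (edgeWeight G W) ν) :
    ∃ v ∈ P.boundary, μ v ≠ 0 := by
  let φ : MvPolynomial (Sym2 (Fin n)) K →+* FractionRing (MvPolynomial (Sym2 (Fin n)) K) :=
    algebraMap _ _
  have hφ : Function.Injective φ := IsFractionRing.injective _ _
  let y (v : Sym2 (Fin n)) := φ (X v)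
  have hy (v) : y v ≠ 0 := (map_ne_zero_iff φ hφ).2 (X_ne_zero v)
  let F := Sym2.lift ⟨P.degeneration y W, fun x z => (P.degeneration_isSymm.apply x z).symm⟩
  refine exists_mem_of_eval₂_eq_zero hφ (F := F) ?_ ?_ hμ hmin
  · exact Sym2.ind fun x z => P.X_pow_dvd_degeneration_sub hy hW x z
  · refine eval₂_eq_zero_of_mem_minorsIdeal _ F (fun a b => ?_) hf
    exact P.det_submatrix_degeneration_eq_zero a b (by rwa [Fintype.card_fin])

end InitialForm

namespace TreePartition

variable {ι κ : Type*} {G : SimpleGraph ι} {H : SimpleGraph κ}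

/-- Transport of a tree partition along an isomorphism of graphs. -/
def map (P : TreePartition G) (φ : G ≃g H) : TreePartition H where
  root x := φ (P.root (φ.symm x))
  parent x := φ (P.parent (φ.symm x))
  depth x := P.depth (φ.symm x)
  root_root x := by rw [φ.symm_apply_apply, P.root_root]
  depth_eq_zero h := P.depth_eq_zero ((φ.symm_apply_eq).2 h.symm).symm
  depth_parent h := by
    rw [φ.symm_apply_apply]
    exact P.depth_parent (mt (φ.toEquiv.eq_symm_apply.1) h)
  root_parent h := by
    rw [φ.symm_apply_apply]
    exact congrArg φ (P.root_parent (mt φ.toEquiv.eq_symm_apply.1 h))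
  adj_parent h := by
    rw [← φ.symm.map_adj_iff, φ.symm_apply_apply]
    exact P.adj_parent (mt (φ.toEquiv.eq_symm_apply.1) h)
  parent_of_adj {x z} hadj hroot := by
    have h := P.parent_of_adj (φ.symm.map_adj_iff.2 hadj) (φ.injective hroot)
    exact h.imp (fun h => ⟨mt (φ.toEquiv.eq_symm_apply.2) h.1, φ.toEquiv.eq_symm_apply.1 h.2⟩)
      fun h => ⟨mt (φ.toEquiv.eq_symm_apply.2) h.1, φ.toEquiv.eq_symm_apply.1 h.2⟩
  existsUnique_edge h := by
    refine ((φ.toEquiv.prodCongr φ.toEquiv).existsUnique_congr fun e => ?_).1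
      (P.existsUnique_edge (ne_of_apply_ne φ h))
    simp [φ.map_adj_iff]

variable {P : TreePartition G}

theorem exists_mem_boundary_of_mem_boundary_map {φ : G ≃g H} {v : Sym2 κ}
    (hv : v ∈ (P.map φ).boundary) : ∃ w ∈ P.boundary, w.map φ = v := by
  rcases hv with ⟨x, hx, rfl⟩ | ⟨x, z, hadj, hroot, rfl⟩
  · exact ⟨_, .inl ⟨φ.symm x, φ.toEquiv.eq_symm_apply.2 hx, rfl⟩, by simp⟩
  · exact ⟨_, .inr ⟨φ.symm x, φ.symm z, φ.symm.map_adj_iff.2 hadj, ne_of_apply_ne φ hroot, rfl⟩,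
      by simp⟩

theorem card_nonroot_add_card_le [Fintype ι] [DecidableEq ι] (P : TreePartition G)
    {S : Finset ι} (hS : ∀ x ∈ S, P.root x = x) :
    Fintype.card P.Nonroot + S.card ≤ Fintype.card ι := by
  rw [Fintype.card_subtype, ← Finset.card_union_of_disjoint]
  · exact Finset.card_le_univ _
  · exact Finset.disjoint_left.2 fun x hx hxS => (Finset.mem_filter.1 hx).2 (hS x hxS)

theorem card_nonroot_map [Fintype ι] [DecidableEq ι] [Fintype κ] [DecidableEq κ] (φ : G ≃g H) :
    Fintype.card (P.map φ).Nonroot = Fintype.card P.Nonroot :=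
  Fintype.card_congr ((φ.toEquiv.subtypeEquiv fun x => by simp [map]).symm)

end TreePartition

section ThreeArcs

variable {n : ℕ}

theorem cycleGraph_adj_iff_val (hn : 2 ≤ n) {x z : Fin n} : (SimpleGraph.cycleGraph n).Adj x z ↔
    (x : ℕ) + 1 = z ∨ (z : ℕ) + 1 = x ∨ ((x : ℕ) = 0 ∧ (z : ℕ) + 1 = n) ∨
      ((z : ℕ) = 0 ∧ (x : ℕ) + 1 = n) := by
  have hx := x.2
  have hz := z.2
  have hsub {p q : Fin n} : ((p - q : Fin n) : ℕ) = if q ≤ p then (p : ℕ) - q else n + p - q := by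
    split_ifs with h
    · exact Fin.sub_val_of_le h
    · exact Fin.coe_sub_iff_lt.2 (not_le.1 h)
  rw [SimpleGraph.cycleGraph_adj', hsub, hsub]
  split_ifs <;> omega

/-- The diagonal pair at the vertex `x` of the cycle `0, 1, …, n - 1`. -/
def cycleLoop (n : ℕ) [NeZero n] (x : ℕ) : Sym2 (Fin n) := s(Fin.ofNat n x, Fin.ofNat n x)

/-- The edge from `x` to its successor in the cycle `0, 1, …, n - 1`. -/
def cycleEdge (n : ℕ) [NeZero n] (x : ℕ) : Sym2 (Fin n) := s(Fin.ofNat n x, Fin.ofNat n (x + 1))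

/-- A partition of the cycle `0, 1, …, n - 1` into the arcs `[0, a]`, `[a + 1, b]` and
`[b + 1, n - 1]`, with a vertex chosen in each: `i`, `j` and `k` respectively. -/
structure ThreeArcs (n : ℕ) where
  i : ℕ
  a : ℕ
  j : ℕ
  b : ℕ
  k : ℕ
  i_le_a : i ≤ a
  a_lt_j : a < j
  j_le_b : j ≤ b
  b_lt_k : b < k
  k_lt : k < n

namespace ThreeArcs

variable (A : ThreeArcs n)

theorem j_lt : A.j < n := A.j_le_b.trans_lt (A.b_lt_k.trans A.k_lt)

theorem i_lt : A.i < n := A.i_le_a.trans_lt (A.a_lt_j.trans A.j_lt)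

/-- The chosen vertex of the arc containing `x`. -/
def root (x : Fin n) : Fin n :=
  if (x : ℕ) ≤ A.a then ⟨A.i, A.i_lt⟩ else if (x : ℕ) ≤ A.b then ⟨A.j, A.j_lt⟩ else ⟨A.k, A.k_lt⟩

/-- The neighbour of `x` on the way to the chosen vertex of its arc. -/
def parent (x : Fin n) : Fin n :=
  if h : x < A.root x then ⟨x + 1, Nat.lt_of_le_of_lt h (A.root x).2⟩
  else ⟨x - 1, (Nat.sub_le _ _).trans_lt x.2⟩

theorem val_root (x : Fin n) :
    (A.root x : ℕ) = if (x : ℕ) ≤ A.a then A.i else if (x : ℕ) ≤ A.b then A.j else A.k := by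
  rw [root]
  split_ifs <;> rfl

theorem val_parent (x : Fin n) :
    (A.parent x : ℕ) = if (x : ℕ) < A.root x then (x : ℕ) + 1 else x - 1 := by
  rw [parent]
  split_ifs <;> first | rfl | contradiction

theorem root_eq_root_iff {x z : Fin n} : A.root x = A.root z ↔
    (x ≤ A.a ↔ z ≤ A.a) ∧ ((x : ℕ) ≤ A.b ↔ (z : ℕ) ≤ A.b) := by
  obtain ⟨i, a, j, b, k, hia, haj, hjb, hbk, hk⟩ := A
  rw [Fin.ext_iff, val_root, val_root]
  dsimp only
  split_ifs <;> omega

theorem root_root (x : Fin n) : A.root (A.root x) = A.root x := by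
  obtain ⟨i, a, j, b, k, hia, haj, hjb, hbk, hk⟩ := A
  rw [root_eq_root_iff, val_root]
  dsimp only
  split_ifs <;> omega

theorem root_parent {x : Fin n} (h : A.root x ≠ x) : A.root (A.parent x) = A.root x := by
  have h := Fin.val_ne_of_ne h
  have hx := x.2
  rw [root_eq_root_iff, val_parent]
  rw [val_root] at h ⊢
  obtain ⟨i, a, j, b, k, hia, haj, hjb, hbk, hk⟩ := A
  dsimp only at h ⊢
  split_ifs at h ⊢ <;> omega

include A in
theorem adj_iff {x z : Fin n} : (SimpleGraph.cycleGraph n).Adj x z ↔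
    (x : ℕ) + 1 = z ∨ (z : ℕ) + 1 = x ∨ ((x : ℕ) = 0 ∧ (z : ℕ) + 1 = n) ∨
      ((z : ℕ) = 0 ∧ (x : ℕ) + 1 = n) :=
  cycleGraph_adj_iff_val ((Nat.one_le_of_lt A.a_lt_j).trans_lt A.j_lt)

theorem existsUnique_edge_of_lt {x z : Fin n} (h : A.root x < A.root z) :
    ∃! e : Fin n × Fin n, A.root e.1 = A.root x ∧ A.root e.2 = A.root z ∧
      (SimpleGraph.cycleGraph n).Adj e.1 e.2 := by
  have hx := x.2
  have hz := z.2
  rw [Fin.lt_def, val_root, val_root] at h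
  simp only [A.adj_iff, root_eq_root_iff]
  obtain ⟨i, a, j, b, k, hia, haj, hjb, hbk, hk⟩ := A
  dsimp only at h ⊢
  obtain ⟨p, q, hpq⟩ : ∃ p q : Fin n, ((x ≤ a ∧ z ≤ b) ∧ (p : ℕ) = a ∧ (q : ℕ) = a + 1) ∨
      ((x ≤ a ∧ b < z) ∧ (p : ℕ) = 0 ∧ (q : ℕ) = n - 1) ∨
      (a < x ∧ (p : ℕ) = b ∧ (q : ℕ) = b + 1) := by
    rcases lt_or_ge a x with hxa | hxa
    · exact ⟨⟨b, by omega⟩, ⟨b + 1, by omega⟩, .inr (.inr ⟨hxa, rfl, rfl⟩)⟩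
    rcases lt_or_ge b z with hzb | hzb
    · exact ⟨⟨0, by omega⟩, ⟨n - 1, by omega⟩, .inr (.inl ⟨⟨hxa, hzb⟩, rfl, rfl⟩)⟩
    · exact ⟨⟨a, by omega⟩, ⟨a + 1, by omega⟩, .inl ⟨⟨hxa, hzb⟩, rfl, rfl⟩⟩
  refine ⟨(p, q), ?_, ?_⟩
  · dsimp only
    split_ifs at h <;> omega
  · rintro ⟨p', q'⟩ h'
    have hp' := p'.2
    dsimp only at h'
    rw [Prod.mk.injEq, Fin.ext_iff, Fin.ext_iff]
    split_ifs at h <;> omega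

theorem existsUnique_edge {x z : Fin n} (h : A.root x ≠ A.root z) :
    ∃! e : Fin n × Fin n, A.root e.1 = A.root x ∧ A.root e.2 = A.root z ∧
      (SimpleGraph.cycleGraph n).Adj e.1 e.2 := by
  rcases h.lt_or_gt with h | h
  · exact A.existsUnique_edge_of_lt h
  · refine ((Equiv.prodComm _ _).existsUnique_congr fun e => ?_).1 (A.existsUnique_edge_of_lt h)
    exact ⟨fun ⟨h₁, h₂, h₃⟩ => ⟨h₂, h₁, h₃.symm⟩, fun ⟨h₁, h₂, h₃⟩ => ⟨h₂, h₁, h₃.symm⟩⟩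

/-- The tree partition of the cycle whose trees are the three arcs. -/
def treePartition : TreePartition (SimpleGraph.cycleGraph n) where
  root := A.root
  parent := A.parent
  depth x := (x - A.root x) + (A.root x - x)
  root_root := A.root_root
  depth_eq_zero h := by rw [h]; simp
  depth_parent {x} h := by
    have h := Fin.val_ne_of_ne h
    rw [A.root_parent (Fin.ne_of_val_ne h), val_parent]
    split_ifs <;> omega
  root_parent h := A.root_parent h
  adj_parent {x} h := by
    have h := Fin.val_ne_of_ne h
    rw [A.adj_iff, val_parent]
    split_ifs <;> omega
  parent_of_adj {x z} hadj hroot := by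
    have h := congrArg Fin.val hroot
    have hx := x.2
    have hz := z.2
    rw [A.adj_iff] at hadj
    obtain ⟨harc, harc'⟩ := A.root_eq_root_iff.1 hroot
    simp only [ne_eq, Fin.ext_iff, val_parent]
    obtain ⟨i, a, j, b, k, hia, haj, hjb, hbk, hk⟩ := A
    dsimp only at *
    split_ifs <;> omega
  existsUnique_edge h := A.existsUnique_edge h

theorem card_nonroot_lt : Fintype.card A.treePartition.Nonroot < n - 2 := by
  have hcard := A.treePartition.card_nonroot_add_card_le
    (S := {⟨A.i, A.i_lt⟩, ⟨A.j, A.j_lt⟩, ⟨A.k, A.k_lt⟩}) (by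
      obtain ⟨i, a, j, b, k, hia, haj, hjb, hbk, hk⟩ := A
      simp only [Finset.mem_insert, Finset.mem_singleton, treePartition, Fin.ext_iff, val_root]
      intro x hx
      split_ifs <;> omega)
  obtain ⟨i, a, j, b, k, hia, haj, hjb, hbk, hk⟩ := A
  rw [Fintype.card_fin, Finset.card_eq_three.2 ⟨_, _, _, ?_, ?_, ?_, rfl⟩] at hcard
  · omega
  all_goals
    simp only [ne_eq, Fin.ext_iff]
    omega

theorem depth_lt (x : Fin n) : A.treePartition.depth x < n := by
  have hx := x.2
  have hr := (A.root x).2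
  change (x - A.root x : ℕ) + (A.root x - x) < n
  omega

theorem eq_of_mem_boundary [NeZero n] {v : Sym2 (Fin n)} (hv : v ∈ A.treePartition.boundary) :
    (∃ x ∈ ({A.i, A.j, A.k} : Set ℕ), v = cycleLoop n x) ∨
      ∃ x ∈ ({A.a, A.b, n - 1} : Set ℕ), v = cycleEdge n x := by
  rcases hv with ⟨x, hx, rfl⟩ | ⟨x, z, hadj, hroot, rfl⟩
  · refine .inl ⟨x, ?_, by rw [cycleLoop, Fin.ofNat_val_eq_self]⟩
    have h := A.val_root x
    rw [show A.root x = x from hx] at h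
    split_ifs at h
    · exact .inl h
    · exact .inr (.inl h)
    · exact .inr (.inr h)
  · right
    have hadj' := A.adj_iff.1 hadj
    wlog hnext : (x : ℕ) + 1 = z ∨ ((z : ℕ) = 0 ∧ (x : ℕ) + 1 = n) generalizing x z
    · rw [Sym2.eq_swap]
      exact this z x hadj.symm hroot.symm (A.adj_iff.1 hadj.symm) (by omega)
    have hz : Fin.ofNat n (x + 1) = z := by
      rcases hnext with h | ⟨hz, h⟩
      · rw [h, Fin.ofNat_val_eq_self]
      · rw [h, Fin.ext_iff, hz, Fin.val_ofNat, Nat.mod_self]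
    refine ⟨x, ?_, by rw [cycleEdge, Fin.ofNat_val_eq_self, hz]⟩
    have harc := mt A.root_eq_root_iff.2 hroot
    simp only [Set.mem_insert_iff, Set.mem_singleton_iff]
    omega

end ThreeArcs

end ThreeArcs

/-- The index of a leading minor of size `n - 2`: the minor omits the rows `p₁`, `q₂` and the
columns `p₂`, `q₁`. -/
structure MinorIndex (n : ℕ) where
  p₁ : ℕ
  p₂ : ℕ
  q₁ : ℕ
  q₂ : ℕ
  p_le : p₁ ≤ p₂
  p_lt_q : p₂ < q₁
  q_le : q₁ ≤ q₂
  q_lt : q₂ < n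

namespace MinorIndex

variable {n : ℕ} (Q : MinorIndex n)

/-- The rows of the minor indexed by `Q`. -/
def rows : Finset (Fin n) := {x | (x : ℕ) ≠ Q.p₁ ∧ (x : ℕ) ≠ Q.q₂}

/-- The columns of the minor indexed by `Q`. -/
def cols : Finset (Fin n) := {x | (x : ℕ) ≠ Q.p₂ ∧ (x : ℕ) ≠ Q.q₁}

/-- The bijection from the rows to the columns that moves `(p₁, p₂]` down by one, moves `[q₁, q₂)`
up by one and fixes the other rows; its term of the minor is the leading one. -/
def shift (x : Fin n) : Fin n :=
  if Q.p₁ < x ∧ x ≤ Q.p₂ then ⟨x - 1, (Nat.sub_le _ _).trans_lt x.2⟩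
  else if h : Q.q₁ ≤ x ∧ x < Q.q₂ then ⟨x + 1, (Nat.succ_le_of_lt h.2).trans_lt Q.q_lt⟩
  else x

variable {Q}

theorem mem_rows {x : Fin n} : x ∈ Q.rows ↔ (x : ℕ) ≠ Q.p₁ ∧ (x : ℕ) ≠ Q.q₂ := by
  simp [rows]

theorem mem_cols {x : Fin n} : x ∈ Q.cols ↔ (x : ℕ) ≠ Q.p₂ ∧ (x : ℕ) ≠ Q.q₁ := by
  simp [cols]

theorem val_shift (x : Fin n) : (Q.shift x : ℕ) = if Q.p₁ < x ∧ x ≤ Q.p₂ then (x : ℕ) - 1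
    else if Q.q₁ ≤ x ∧ x < Q.q₂ then (x : ℕ) + 1 else x := by
  rw [shift]
  split_ifs <;> rfl

theorem shift_cases {x : Fin n} (hx : x ∈ Q.rows) :
    (((x : ℕ) < Q.p₁ ∨ (Q.p₂ < x ∧ x < Q.q₁) ∨ Q.q₂ < x) ∧ Q.shift x = x) ∨
      ((Q.p₁ < x ∧ x ≤ Q.p₂) ∧ (Q.shift x : ℕ) + 1 = x) ∨
      ((Q.q₁ ≤ x ∧ x < Q.q₂) ∧ (x : ℕ) + 1 = Q.shift x) := by
  obtain ⟨p₁, p₂, q₁, q₂, hp, hpq, hq, hqn⟩ := Q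
  rw [mem_rows] at hx
  rw [Fin.ext_iff, val_shift]
  dsimp only at hx ⊢
  split_ifs <;> omega

end MinorIndex

section Dichotomy

variable {n : ℕ} (D E : ℕ → Prop)

theorem exists_initial_run {m N : ℕ} (h : m ≤ N) :
    ∃ i, m ≤ i ∧ i ≤ N ∧ (∀ x, m ≤ x → x < i → D x) ∧ (i = N ∨ ¬ D i) := by
  classical
  have hex : ∃ i, m ≤ i ∧ (i = N ∨ ¬ D i) := ⟨N, h, .inl rfl⟩
  refine ⟨Nat.find hex, (Nat.find_spec hex).1, Nat.find_min' hex ⟨h, .inl rfl⟩,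
    fun x hmx hx => ?_, (Nat.find_spec hex).2⟩
  have hnot := Nat.find_min hex hx
  tauto

theorem exists_two_runs {m N : ℕ} (h : m ≤ N) :
    ∃ i a, m ≤ i ∧ i ≤ a ∧ a ≤ N ∧ (∀ x, m ≤ x → x < i → D x) ∧ (∀ x, i ≤ x → x < a → E x) ∧
      (a = N ∨ ¬ D i ∧ ¬ E a) := by
  obtain ⟨i, hmi, hiN, hD, hi⟩ := exists_initial_run D h
  obtain ⟨a, hia, haN, hE, ha⟩ := exists_initial_run E hiN
  refine ⟨i, a, hmi, hia, haN, hD, hE, ?_⟩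
  have : i = N → a = N := fun h => le_antisymm haN (h ▸ hia)
  tauto

theorem MinorIndex.exists_or_threeArcs (hn : 2 ≤ n) :
    (∃ Q : MinorIndex n,
      (∀ x < n, x < Q.p₁ ∨ (Q.p₂ < x ∧ x < Q.q₁) ∨ Q.q₂ < x → D x) ∧
      ∀ x, (Q.p₁ ≤ x ∧ x < Q.p₂) ∨ (Q.q₁ ≤ x ∧ x < Q.q₂) → E x) ∨
    ∃ A : ThreeArcs n, (∀ x ∈ ({A.i, A.j, A.k} : Set ℕ), ¬ D x) ∧
      ∀ x ∈ ({A.a, A.b} : Set ℕ), ¬ E x := by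
  obtain ⟨i, a, -, hia, han, hDi, hEa, ha⟩ := exists_two_runs D E (Nat.zero_le (n - 1))
  rcases han.eq_or_lt with rfl | han
  · refine .inl ⟨⟨0, 0, max i 1, n - 1, le_rfl, by omega, by omega, by omega⟩,
      fun x hx h => hDi x (Nat.zero_le x) ?_, fun x h => hEa x ?_ ?_⟩
    all_goals
      dsimp only at h
      omega
  obtain ⟨j, b, haj, hjb, hbn, hDj, hEb, hb⟩ := exists_two_runs D E (Nat.succ_le_of_lt han)
  by_cases hk : ∀ x < n, b < x → D x
  · refine .inl ⟨⟨i, a, j, b, hia, haj, hjb, by omega⟩, fun x hx h => ?_, fun x h => ?_⟩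
    · rcases h with h | h | h
      · exact hDi x (Nat.zero_le x) h
      · exact hDj x h.1 h.2
      · exact hk x hx h
    · exact h.elim (fun h => hEa x h.1 h.2) fun h => hEb x h.1 h.2
  · push Not at hk
    obtain ⟨k, hkn, hbk, hDk⟩ := hk
    obtain ⟨hDi, hEa⟩ := ha.resolve_left han.ne
    obtain ⟨hDj, hEb⟩ := hb.resolve_left (by omega)
    refine .inr ⟨⟨i, a, j, b, k, hia, haj, hjb, hbk, hkn⟩, ?_, ?_⟩
    · rintro x (rfl | rfl | rfl) <;> assumption
    · rintro x (rfl | rfl) <;> assumption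

variable [NeZero n]

theorem MinorIndex.sym2_shift_mem {Q : MinorIndex n} {M : Set (Sym2 (Fin n))}
    (hD : ∀ x < n, x < Q.p₁ ∨ (Q.p₂ < x ∧ x < Q.q₁) ∨ Q.q₂ < x → cycleLoop n x ∈ M)
    (hE : ∀ x, (Q.p₁ ≤ x ∧ x < Q.p₂) ∨ (Q.q₁ ≤ x ∧ x < Q.q₂) → cycleEdge n x ∈ M)
    {x : Fin n} (hx : x ∈ Q.rows) : s(x, Q.shift x) ∈ M := by
  rcases Q.shift_cases hx with ⟨h, hs⟩ | ⟨h, hs⟩ | ⟨h, hs⟩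
  · simpa only [hs, cycleLoop, Fin.ofNat_val_eq_self] using hD x x.2 h
  · have := hE (Q.shift x) (.inl (by omega))
    rwa [cycleEdge, hs, Fin.ofNat_val_eq_self, Fin.ofNat_val_eq_self, Sym2.eq_swap] at this
  · have := hE x (.inr h)
    rwa [cycleEdge, hs, Fin.ofNat_val_eq_self, Fin.ofNat_val_eq_self] at this

/-- The rotation of the cycle by `c`. -/
def cycleRotation (c : Fin n) : SimpleGraph.cycleGraph n ≃g SimpleGraph.cycleGraph n where
  toEquiv := Equiv.addRight c
  map_rel_iff' := by simp [SimpleGraph.cycleGraph_adj']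

theorem cycleEdge_map_cycleRotation (x c : ℕ) :
    (cycleEdge n x).map (cycleRotation (Fin.ofNat n c)) = cycleEdge n (x + c) := by
  have h (m : ℕ) : cycleRotation (Fin.ofNat n c) (Fin.ofNat n m) = Fin.ofNat n (m + c) := by
    simp [cycleRotation, Fin.ext_iff, Fin.val_add]
  rw [cycleEdge, Sym2.map_mk, h, h, cycleEdge, add_right_comm]

variable {V : Type*} {G : SimpleGraph V}

theorem exists_forall_cycleEdge_mem_or_last_notMem (φ : SimpleGraph.cycleGraph n ≃g G)
    (M : Set (Sym2 V)) : ∃ φ : SimpleGraph.cycleGraph n ≃g G,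
      (∀ x, (cycleEdge n x).map φ ∈ M) ∨ (cycleEdge n (n - 1)).map φ ∉ M := by
  by_cases hall : ∀ x, (cycleEdge n x).map φ ∈ M
  · exact ⟨φ, .inl hall⟩
  push Not at hall
  obtain ⟨c, hc⟩ := hall
  refine ⟨(cycleRotation (Fin.ofNat n (c + 1))).trans φ, .inr ?_⟩
  have hc' : cycleEdge n (n - 1 + (c + 1)) = cycleEdge n c := by
    have hn := NeZero.one_le (n := n)
    rw [show n - 1 + (c + 1) = c + n by omega]
    simp [cycleEdge, Fin.ext_iff, add_right_comm c n 1]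
  change Sym2.map (φ ∘ cycleRotation (Fin.ofNat n (c + 1))) (cycleEdge n (n - 1)) ∉ M
  rwa [← Sym2.map_map, cycleEdge_map_cycleRotation, hc']

theorem exists_minorIndex_or_threeArcs (hn : 2 ≤ n) (φ : SimpleGraph.cycleGraph n ≃g G)
    (M : Set (Sym2 V)) : ∃ φ : SimpleGraph.cycleGraph n ≃g G,
      (∃ Q : MinorIndex n, ∀ x ∈ Q.rows, s(φ x, φ (Q.shift x)) ∈ M) ∨
      ∃ A : ThreeArcs n, ∀ v ∈ A.treePartition.boundary, v.map φ ∉ M := by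
  obtain ⟨φ, hφ⟩ := exists_forall_cycleEdge_mem_or_last_notMem φ M
  rcases MinorIndex.exists_or_threeArcs (fun x => (cycleLoop n x).map φ ∈ M)
    (fun x => (cycleEdge n x).map φ ∈ M) hn with ⟨Q, hD, hE⟩ | ⟨A, hD, hE⟩
  · exact ⟨φ, .inl ⟨Q, fun x => Q.sym2_shift_mem (M := Sym2.map φ ⁻¹' M) hD hE⟩⟩
  · refine ⟨φ, .inr ⟨A, fun v hv => ?_⟩⟩
    rcases A.eq_of_mem_boundary hv with ⟨x, hx, rfl⟩ | ⟨x, rfl | rfl | rfl, rfl⟩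
    · exact hD x hx
    · exact hE _ (.inl rfl)
    · exact hE _ (.inr rfl)
    · exact hφ.resolve_left fun h => hE _ (.inl rfl) (h A.a)

end Dichotomy

section GenericDeterminant

variable {K : Type*} [Field K] {n : ℕ} {η : Type*} [Fintype η] {a b : η → Fin n}

theorem exists_equiv_strictMono (ha : Function.Injective a) :
    ∃ e : Fin (Fintype.card η) ≃ η, StrictMono (a ∘ e) := by
  let : LinearOrder η := LinearOrder.lift' a ha
  exact ⟨(Fintype.orderIsoFinOfCardEq η rfl).toEquiv,
    fun _ _ h => (Fintype.orderIsoFinOfCardEq η rfl).strictMono h⟩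

/-- The exponent vector of the monomial `∏ i, x_{a i, b i}`. -/
noncomputable def pairExponent {V : Type*} (a b : η → V) : Sym2 V →₀ ℕ :=
  ∑ i, Finsupp.single s(a i, b i) 1

theorem pairExponent_apply {V : Type*} [DecidableEq V] (a b : η → V) (v : Sym2 V) :
    pairExponent a b v = Finset.card {i | s(a i, b i) = v} := by
  rw [pairExponent, Finsupp.finsetSum_apply, Finset.card_filter]
  exact Finset.sum_congr rfl fun i _ => Finsupp.single_apply

theorem pairExponent_ne_zero {V : Type*} {a b : η → V} (i : η) :
    pairExponent a b s(a i, b i) ≠ 0 := by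
  classical
  rw [pairExponent_apply]
  exact Finset.card_ne_zero_of_mem (Finset.mem_filter.2 ⟨Finset.mem_univ i, rfl⟩)

theorem sum_pairExponent {V : Type*} (a b : η → V) :
    ((pairExponent a b).sum fun _ e => e) = Fintype.card η := by
  rw [pairExponent, ← Finsupp.sum_finsetSum_index (fun _ => rfl) fun _ _ _ => rfl]
  simp

variable [DecidableEq η]

theorem det_mem_minorsIdeal (ha : Function.Injective a) (hb : Function.Injective b) :
    (Matrix.of fun i j => (X s(a i, b j) : MvPolynomial (Sym2 (Fin n)) K)).det ∈
      minorsIdeal K n (Fintype.card η) := by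
  obtain ⟨e, he⟩ := exists_equiv_strictMono ha
  obtain ⟨e', he'⟩ := exists_equiv_strictMono hb
  let M := Matrix.of fun i j => (X s(a i, b j) : MvPolynomial (Sym2 (Fin n)) K)
  let σ : Equiv.Perm η := e.symm.trans e'
  have hminor : symMinor K (a ∘ e) (b ∘ e') = σ.sign * M.det := by
    rw [← Matrix.det_permute', ← Matrix.det_submatrix_equiv_self e]
    congr 1
    ext k
    simp [σ]
  have hmem : symMinor K (a ∘ e) (b ∘ e') ∈ minorsIdeal K n (Fintype.card η) :=
    Ideal.subset_span ⟨_, _, he, he', rfl⟩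
  rw [hminor] at hmem
  exact (Ideal.unit_mul_mem_iff_mem _ ((Units.isUnit σ.sign).map (Int.castRingHom _))).1 hmem

theorem det_eq_sum_monomial :
    (Matrix.of fun i j => (X s(a i, b j) : MvPolynomial (Sym2 (Fin n)) K)).det =
    ∑ σ : Equiv.Perm η, monomial (pairExponent a (b ∘ σ)) ((σ.sign : ℤ) : K) := by
  rw [← Matrix.det_transpose, Matrix.det_apply']
  refine Finset.sum_congr rfl fun σ _ => ?_
  rw [pairExponent, monomial_sum_index, map_intCast]
  rfl

theorem isLeadingMonomial_det {rank : Sym2 (Fin n) → ℕ}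
    (h : ∀ σ : Equiv.Perm η, σ ≠ 1 → DegRevLexLT rank (pairExponent a (b ∘ σ)) (pairExponent a b)) :
    IsLeadingMonomial rank
      (Matrix.of fun i j => (X s(a i, b j) : MvPolynomial (Sym2 (Fin n)) K)).det
      (pairExponent a b) := by
  classical
  rw [det_eq_sum_monomial]
  constructor
  · rw [mem_support_iff, coeff_sum, Finset.sum_eq_single 1]
    · simp
    · intro σ _ hσ
      rw [coeff_monomial, if_neg]
      intro heq
      exact DegRevLexLT.irrefl _ (heq ▸ h σ hσ)
    · simp
  · intro ν hν hne
    obtain ⟨σ, -, hσ⟩ := Finset.mem_biUnion.1 (support_sum hν)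
    obtain rfl := Finset.mem_singleton.1 (support_monomial_subset hσ)
    exact h σ fun hσ => hne (by rw [hσ]; rfl)

end GenericDeterminant

namespace MinorIndex

variable {n : ℕ} {Q : MinorIndex n}

theorem two_le (Q : MinorIndex n) : 2 ≤ n := by
  obtain ⟨p₁, p₂, q₁, q₂, hp, hpq, hq, hqn⟩ := Q
  omega

theorem card_rows : Fintype.card Q.rows = n - 2 := by
  have hq := Q.q_lt
  have hpq : Q.p₁ < Q.q₂ := Q.p_le.trans_lt (Q.p_lt_q.trans_le Q.q_le)
  have hrows : Q.rows = Finset.univ \ {⟨Q.p₁, hpq.trans hq⟩, ⟨Q.q₂, hq⟩} := by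
    ext x
    simp [mem_rows, Fin.ext_iff]
  rw [Fintype.card_coe, hrows, Finset.card_sdiff_of_subset (Finset.subset_univ _), Finset.card_fin,
    Finset.card_pair (Fin.ne_of_val_ne hpq.ne)]

theorem mapsTo_shift : Set.MapsTo Q.shift Q.rows Q.cols := by
  intro x hx
  obtain ⟨p₁, p₂, q₁, q₂, hp, hpq, hq, hqn⟩ := Q
  rw [Finset.mem_coe, mem_rows] at hx
  rw [Finset.mem_coe, mem_cols, val_shift]
  dsimp only at hx ⊢
  split_ifs <;> omega

theorem injOn_shift : Set.InjOn Q.shift Q.rows := by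
  intro x hx z hz h
  obtain ⟨p₁, p₂, q₁, q₂, hp, hpq, hq, hqn⟩ := Q
  rw [Finset.mem_coe, mem_rows] at hx hz
  rw [Fin.ext_iff, val_shift, val_shift] at h
  rw [Fin.ext_iff]
  dsimp only at hx hz h
  split_ifs at h <;> omega

theorem shift_eq_or_adj {x : Fin n} (hx : x ∈ Q.rows) :
    Q.shift x = x ∨ (SimpleGraph.cycleGraph n).Adj x (Q.shift x) := by
  rw [cycleGraph_adj_iff_val Q.two_le]
  rcases shift_cases hx with ⟨-, h⟩ | ⟨-, h⟩ | ⟨-, h⟩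
  · exact .inl h
  · exact .inr (.inr (.inl h))
  · exact .inr (.inl h)

section Rigidity

variable {ρ : Fin n → Fin n} (hinj : Set.InjOn ρ Q.rows) (hmaps : Set.MapsTo ρ Q.rows Q.cols)
  (hadj : ∀ x ∈ Q.rows, ρ x = x ∨ (SimpleGraph.cycleGraph n).Adj x (ρ x))

include hinj hmaps in
theorem exists_notMem_of_notMem_cols {S : Finset (Fin n)} (hS : S ⊆ Q.rows) {q : Fin n}
    (hqS : q ∈ S) (hq : q ∉ Q.cols) : ∃ x ∈ S, ρ x ∉ S := by
  by_contra! hSS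
  obtain ⟨x, hx, rfl⟩ := Finset.surjOn_of_injOn_of_card_le ρ hSS (hinj.mono hS) le_rfl hqS
  exact hq (hmaps (hS hx))

include hinj hmaps hadj in
theorem val_add_one_eq_of_mem_Ioc {c : Fin n} (hc : Q.p₁ < c ∧ c ≤ Q.p₂) :
    (ρ c : ℕ) + 1 = c := by
  by_contra hne
  have hn := Q.two_le
  have hrows {x : Fin n} (hx : (c : ℕ) ≤ x ∧ (x : ℕ) < Q.q₁) : x ∈ Q.rows :=
    mem_rows.2 ⟨by omega, (hx.2.trans_le Q.q_le).ne⟩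
  obtain ⟨x, hx, hρx⟩ := exists_notMem_of_notMem_cols hinj hmaps
    (S := {x | (c : ℕ) ≤ x ∧ (x : ℕ) < Q.q₁})
    (q := ⟨Q.p₂, Q.p_lt_q.trans_le Q.q_le |>.trans Q.q_lt⟩)
    (fun x hx => hrows (by simpa using hx)) (by simpa using ⟨hc.2, Q.p_lt_q⟩) (by simp [mem_cols])
  simp only [Finset.mem_filter, Finset.mem_univ, true_and] at hx hρx
  have hcol := mem_cols.1 (hmaps (hrows hx))
  have hx' := hadj x (hrows hx)
  rw [cycleGraph_adj_iff_val hn, Fin.ext_iff] at hx'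
  have hqn := Q.q_le.trans_lt Q.q_lt
  rcases eq_or_ne x c with rfl | hxc
  · omega
  · have hxc := Fin.val_ne_of_ne hxc
    omega

include hinj hmaps hadj in
theorem val_eq_add_one_of_mem_Ico {c : Fin n} (hc : Q.q₁ ≤ c ∧ c < Q.q₂) :
    (c : ℕ) + 1 = ρ c := by
  by_contra hne
  have hn := Q.two_le
  have hqn := Q.q_lt
  have hrows {x : Fin n} (hx : Q.p₂ < x ∧ (x : ℕ) ≤ c) : x ∈ Q.rows :=
    mem_rows.2 ⟨(Q.p_le.trans_lt hx.1).ne', by omega⟩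
  obtain ⟨x, hx, hρx⟩ := exists_notMem_of_notMem_cols hinj hmaps
    (S := {x | Q.p₂ < x ∧ (x : ℕ) ≤ c}) (q := ⟨Q.q₁, Q.q_le.trans_lt hqn⟩)
    (fun x hx => hrows (by simpa using hx)) (by simpa using ⟨Q.p_lt_q, hc.1⟩) (by simp [mem_cols])
  simp only [Finset.mem_filter, Finset.mem_univ, true_and] at hx hρx
  have hcol := mem_cols.1 (hmaps (hrows hx))
  have hx' := hadj x (hrows hx)
  rw [cycleGraph_adj_iff_val hn, Fin.ext_iff] at hx'
  rcases eq_or_ne x c with rfl | hxc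
  · omega
  · have hxc := Fin.val_ne_of_ne hxc
    omega

include hinj hmaps hadj in
theorem eq_shift_or_shift_eq {x : Fin n} (hx : x ∈ Q.rows) : ρ x = Q.shift x ∨ Q.shift x = x := by
  rcases shift_cases hx with ⟨-, h⟩ | ⟨hc, h⟩ | ⟨hc, h⟩
  · exact .inr h
  · have := val_add_one_eq_of_mem_Ioc hinj hmaps hadj hc
    exact .inl (Fin.ext (by omega))
  · exact .inl (Fin.ext ((val_eq_add_one_of_mem_Ico hinj hmaps hadj hc).symm.trans h))

end Rigidity

end MinorIndex

/-- A ranking of the variables compatible with the graph `G`: the diagonal pairs come first, then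
the edges of `G`, then all the other pairs. -/
structure IsEdgeRank {n : ℕ} (G : SimpleGraph (Fin n)) (rank : Sym2 (Fin n) → ℕ) : Prop where
  injective : Function.Injective rank
  rank_lt : ∀ {v w}, edgeWeight G 2 v < edgeWeight G 2 w → rank v < rank w

namespace MinorIndex

variable {n : ℕ} {Q : MinorIndex n} {G : SimpleGraph (Fin n)} {rank : Sym2 (Fin n) → ℕ}
  (φ : SimpleGraph.cycleGraph n ≃g G)

variable (Q) in
/-- The exponent vector of the leading monomial of the minor indexed by `Q`, the vertices of the
cycle being labelled by `φ`. -/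
noncomputable def leadExponent : Sym2 (Fin n) →₀ ℕ :=
  pairExponent (fun x : Q.rows => φ x) fun x => φ (Q.shift x)

theorem edgeWeight_shift_le_one {x : Fin n} (hx : x ∈ Q.rows) :
    edgeWeight G 2 s(φ x, φ (Q.shift x)) ≤ 1 := by
  rcases shift_eq_or_adj hx with h | h
  · rw [h, edgeWeight_diag]
    exact zero_le_one
  · rw [edgeWeight_of_adj (φ.map_adj_iff.2 h)]

theorem leadExponent_eq_zero {v : Sym2 (Fin n)} (hv : 1 < edgeWeight G 2 v) :
    Q.leadExponent φ v = 0 := by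
  rw [leadExponent, pairExponent_apply, Finset.card_eq_zero, Finset.filter_eq_empty_iff]
  rintro x - rfl
  exact (edgeWeight_shift_le_one φ x.2).not_gt hv

variable {φ} {ρ : Fin n → Fin n}

theorem degRevLexLT_of_one_lt_edgeWeight (hrank : IsEdgeRank G rank) {x : Q.rows}
    (hx : 1 < edgeWeight G 2 s(φ x, φ (ρ x))) :
    DegRevLexLT rank (pairExponent (fun x : Q.rows => φ x) fun x => φ (ρ x))
      (Q.leadExponent φ) := by
  refine .of_sum_eq (by rw [leadExponent, sum_pairExponent, sum_pairExponent])
    (v := s(φ x, φ (ρ x))) ?_ fun w hw => ?_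
  · rw [leadExponent_eq_zero φ hx]
    exact Nat.pos_of_ne_zero (pairExponent_ne_zero (b := fun x : Q.rows => φ (ρ x)) x)
  · rw [leadExponent_eq_zero φ (hx.trans_le ?_)]
    · exact Nat.zero_le _
    · exact not_lt.1 fun h => hw.not_gt (hrank.rank_lt h)

theorem degRevLexLT_of_eq_shift_or_shift_eq (hrank : IsEdgeRank G rank)
    (hρ : ∀ x ∈ Q.rows, ρ x = Q.shift x ∨ Q.shift x = x) {x : Q.rows} (hne : ρ x ≠ Q.shift x) :
    DegRevLexLT rank (pairExponent (fun x : Q.rows => φ x) fun x => φ (ρ x))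
      (Q.leadExponent φ) := by
  have hx : Q.shift x = x := (hρ x x.2).resolve_left hne
  have hsub {w : Sym2 (Fin n)} (hw : ¬ w.IsDiag) :
      ({z | s(φ z, φ (Q.shift z)) = w} : Finset Q.rows) ⊆
        ({z | s(φ z, φ (ρ z)) = w} : Finset Q.rows) := by
    intro z hz
    rw [Finset.mem_filter_univ] at hz ⊢
    obtain rfl := hz
    rw [(hρ z z.2).resolve_right fun h => hw (by rw [h]; exact Sym2.diag_isDiag _)]
  have hnd : φ x ≠ φ (ρ x) := fun h => hne ((φ.injective h).symm.trans hx.symm)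
  refine .of_sum_eq (by rw [leadExponent, sum_pairExponent, sum_pairExponent])
    (v := s(φ x, φ (ρ x))) ?_ fun w hw => ?_ <;>
    rw [leadExponent, pairExponent_apply, pairExponent_apply]
  · refine Finset.card_lt_card <|
      (Finset.ssubset_iff_of_subset (hsub (mt Sym2.mk_isDiag_iff.1 hnd))).2 ⟨x, ?_, ?_⟩
    · rw [Finset.mem_filter_univ]
    · rw [Finset.mem_filter_univ, hx]
      exact fun h => hnd (Sym2.mk_isDiag_iff.1 (h ▸ Sym2.diag_isDiag (φ x)))
  · refine Finset.card_le_card (hsub fun hdiag => hw.not_gt (hrank.rank_lt ?_))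
    rw [edgeWeight, if_pos hdiag]
    exact edgeWeight_pos hnd

theorem degRevLexLT_of_ne (hrank : IsEdgeRank G rank) (hinj : Set.InjOn ρ Q.rows)
    (hmaps : Set.MapsTo ρ Q.rows Q.cols) {x : Q.rows} (hne : ρ x ≠ Q.shift x) :
    DegRevLexLT rank (pairExponent (fun x : Q.rows => φ x) fun x => φ (ρ x))
      (Q.leadExponent φ) := by
  by_cases h : ∃ x : Q.rows, 1 < edgeWeight G 2 s(φ x, φ (ρ x))
  · exact degRevLexLT_of_one_lt_edgeWeight hrank h.choose_spec
  push Not at h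
  have hadj : ∀ x ∈ Q.rows, ρ x = x ∨ (SimpleGraph.cycleGraph n).Adj x (ρ x) := by
    intro x hx
    by_contra! hx'
    have hlt := h ⟨x, hx⟩
    rw [edgeWeight_of_not_adj (φ.injective.ne hx'.1.symm) (mt φ.map_adj_iff.1 hx'.2)] at hlt
    exact absurd hlt (by decide)
  exact degRevLexLT_of_eq_shift_or_shift_eq hrank
    (fun x hx => eq_shift_or_shift_eq hinj hmaps hadj hx) hne

theorem isLeadingMonomial_leadExponent {K : Type*} [Field K] (hrank : IsEdgeRank G rank) :
    IsLeadingMonomial rank (Matrix.of fun x z : Q.rows =>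
      (X s(φ x, φ (Q.shift z)) : MvPolynomial (Sym2 (Fin n)) K)).det (Q.leadExponent φ) := by
  refine isLeadingMonomial_det fun σ hσ => ?_
  obtain ⟨x, hx⟩ : ∃ x, σ x ≠ x := not_forall.1 fun h => hσ (Equiv.ext h)
  let τ : Equiv.Perm (Fin n) := Equiv.Perm.ofSubtype σ
  have hτ (z : Q.rows) : τ z = σ z := Equiv.Perm.ofSubtype_apply_coe σ z
  have hτ_maps : Set.MapsTo τ Q.rows Q.rows := fun z hz => hτ ⟨z, hz⟩ ▸ (σ ⟨z, hz⟩).2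
  have hlt := degRevLexLT_of_ne (φ := φ) (ρ := Q.shift ∘ τ) hrank
    (injOn_shift.comp τ.injective.injOn hτ_maps) (mapsTo_shift.comp hτ_maps) (x := x) fun h =>
      hx (Subtype.ext (injOn_shift (σ x).2 x.2 (by rwa [← hτ])))
  simp only [Function.comp_apply, hτ] at hlt
  exact hlt

theorem exists_mem_minorsIdeal (K : Type*) [Field K] (hrank : IsEdgeRank G rank) :
    ∃ f ∈ minorsIdeal K n (n - 2), IsLeadingMonomial rank f (Q.leadExponent φ) := by
  refine ⟨_, ?_, isLeadingMonomial_leadExponent hrank⟩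
  rw [← card_rows (Q := Q)]
  exact det_mem_minorsIdeal (φ.injective.comp Subtype.val_injective)
    (φ.injective.comp injOn_shift.injective)

end MinorIndex

section LeadExponent

variable {n : ℕ} {Q : MinorIndex n} {G : SimpleGraph (Fin n)} {φ : SimpleGraph.cycleGraph n ≃g G}

theorem MinorIndex.eq_of_sym2_shift_eq {x z : Fin n}
    (h : s(x, Q.shift x) = s(z, Q.shift z)) : x = z := by
  obtain ⟨p₁, p₂, q₁, q₂, hp, hpq, hq, hqn⟩ := Q
  rcases Sym2.eq_iff.1 h with ⟨hxz, -⟩ | ⟨hx, hz⟩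
  · exact hxz
  · rw [Fin.ext_iff, val_shift] at hx hz
    rw [Fin.ext_iff]
    dsimp only at hx hz
    split_ifs at hx hz <;> omega

theorem MinorIndex.leadExponent_apply_le_one (v : Sym2 (Fin n)) : Q.leadExponent φ v ≤ 1 := by
  rw [leadExponent, pairExponent_apply, Finset.card_le_one]
  intro x hx z hz
  rw [Finset.mem_filter_univ] at hx hz
  exact Subtype.ext <| eq_of_sym2_shift_eq <| Sym2.map.injective φ.injective (hx.trans hz.symm)

theorem MinorIndex.leadExponent_le {μ : Sym2 (Fin n) →₀ ℕ}
    (hμ : ∀ x ∈ Q.rows, μ s(φ x, φ (Q.shift x)) ≠ 0) : Q.leadExponent φ ≤ μ := by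
  intro v
  by_cases hv : μ v = 0
  · rw [leadExponent, pairExponent_apply, hv, Nat.le_zero, Finset.card_eq_zero,
      Finset.filter_eq_empty_iff]
    rintro x - rfl
    exact hμ x x.2 hv
  · exact (leadExponent_apply_le_one v).trans (Nat.pos_of_ne_zero hv)

end LeadExponent

theorem exists_leadExponent_le {K : Type*} [Field K] {n : ℕ} (hn : 2 ≤ n)
    {G : SimpleGraph (Fin n)} (φ : SimpleGraph.cycleGraph n ≃g G)
    {f : MvPolynomial (Sym2 (Fin n)) K} (hf : f ∈ minorsIdeal K n (n - 2)) (hf0 : f ≠ 0) :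
    ∃ μ ∈ f.support, ∃ (φ : SimpleGraph.cycleGraph n ≃g G) (Q : MinorIndex n),
      Q.leadExponent φ ≤ μ := by
  have : NeZero n := ⟨by omega⟩
  obtain ⟨μ, hμ, hmin⟩ := f.support.exists_min_image (Finsupp.weight (edgeWeight G (4 * n)))
    (support_nonempty.2 hf0)
  obtain ⟨φ, ⟨Q, hQ⟩ | ⟨A, hA⟩⟩ := exists_minorIndex_or_threeArcs hn φ {v | μ v ≠ 0}
  · exact ⟨μ, hμ, φ, Q, MinorIndex.leadExponent_le hQ⟩
  · obtain ⟨v, hv, hμv⟩ := (A.treePartition.map φ).exists_mem_boundary_of_mem_minorsIdeal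
      (fun x => by have := A.depth_lt (φ.symm x); change 4 * A.treePartition.depth _ + 2 ≤ _; omega)
      (TreePartition.card_nonroot_map φ ▸ A.card_nonroot_lt) hf hμ hmin
    obtain ⟨w, hw, rfl⟩ := TreePartition.exists_mem_boundary_of_mem_boundary_map hv
    exact absurd hμv (hA w hw)

section Zigzag

variable {n : ℕ}

theorem mem_Uset_iff {x z : Fin n} : s(x, z) ∈ Uset n ↔
    ((z : ℕ) = x + 2 ∨ ((x : ℕ) = 0 ∧ (z : ℕ) = 1) ∨ ((x : ℕ) = n - 2 ∧ (z : ℕ) = n - 1)) ∨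
      ((x : ℕ) = z + 2 ∨ ((z : ℕ) = 0 ∧ (x : ℕ) = 1) ∨ ((z : ℕ) = n - 2 ∧ (x : ℕ) = n - 1)) := by
  constructor
  · rintro ⟨i, j, h, h'⟩
    rcases Sym2.eq_iff.1 h with ⟨rfl, rfl⟩ | ⟨rfl, rfl⟩
    · exact .inl h'
    · exact .inr h'
  · rintro (h | h)
    · exact ⟨x, z, rfl, h⟩
    · exact ⟨z, x, Sym2.eq_swap, h⟩

/-- The vertices `0, …, n - 1` in the order in which the edges of `Uset n` visit them:
first `0, 2, 4, …`, then the odd vertices in decreasing order. -/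
def zigzag (n : ℕ) : Fin n ≃ Fin n where
  toFun p := ⟨if 2 * (p : ℕ) ≤ n - 1 then 2 * p else 2 * n - 1 - 2 * p, by
    split_ifs <;> omega⟩
  invFun v := ⟨if (v : ℕ) % 2 = 0 then v / 2 else (2 * n - 1 - v) / 2, by
    split_ifs <;> omega⟩
  left_inv p := by
    ext
    dsimp only
    split_ifs <;> omega
  right_inv v := by
    ext
    dsimp only
    split_ifs <;> omega

theorem val_zigzag (p : Fin n) :
    (zigzag n p : ℕ) = if 2 * (p : ℕ) ≤ n - 1 then 2 * (p : ℕ) else 2 * n - 1 - 2 * p :=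
  rfl

/-- The edges of `Uset n` form a Hamiltonian cycle. -/
def zigzagIso (hn : 3 ≤ n) : SimpleGraph.cycleGraph n ≃g SimpleGraph.fromEdgeSet (Uset n) where
  toEquiv := zigzag n
  map_rel_iff' {p q} := by
    rw [SimpleGraph.fromEdgeSet_adj, mem_Uset_iff, cycleGraph_adj_iff_val (by omega), ne_eq,
      Fin.ext_iff, val_zigzag, val_zigzag]
    split_ifs <;> omega

theorem IsGoodRank.rank_bounds (hn : 2 ≤ n) {rank : Sym2 (Fin n) → ℕ} (hrank : IsGoodRank n rank)
    (v : Sym2 (Fin n)) :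
    n * edgeWeight (.fromEdgeSet (Uset n)) 2 v ≤ rank v ∧
      (edgeWeight (.fromEdgeSet (Uset n)) 2 v < 2 →
        rank v < n * (edgeWeight (.fromEdgeSet (Uset n)) 2 v + 1)) := by
  obtain ⟨-, hdiag, hstep, hfirst, hlast, hrest⟩ := hrank
  induction v with | _ x z
  rcases eq_or_ne x z with rfl | hxz
  · rw [edgeWeight_diag, hdiag]
    omega
  by_cases hU : s(x, z) ∈ Uset n
  · rw [edgeWeight_of_adj ((SimpleGraph.fromEdgeSet_adj _).2 ⟨hU, hxz⟩)]
    obtain ⟨i, j, hij, h | h | h⟩ := hU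
    · rw [hij, hstep i j h]
      omega
    · rw [hij, hfirst i j h.1 h.2]
      omega
    · rw [hij, hlast i j h.1 h.2]
      omega
  · rw [edgeWeight_of_not_adj hxz fun h => hU ((SimpleGraph.fromEdgeSet_adj _).1 h).1, mul_comm]
    refine ⟨hrest _ ?_, fun h => absurd h (lt_irrefl 2)⟩
    rintro (⟨i, hi⟩ | h)
    · exact hxz (Sym2.mk_isDiag_iff.1 (hi ▸ Sym2.diag_isDiag i))
    · exact hU h

theorem IsGoodRank.isEdgeRank (hn : 2 ≤ n) {rank : Sym2 (Fin n) → ℕ} (hrank : IsGoodRank n rank) :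
    IsEdgeRank (.fromEdgeSet (Uset n)) rank where
  injective := hrank.1
  rank_lt {v w} h := by
    have hw : edgeWeight (.fromEdgeSet (Uset n)) 2 w ≤ 2 := by
      rw [edgeWeight]
      split_ifs <;> omega
    calc rank v < n * (edgeWeight (.fromEdgeSet (Uset n)) 2 v + 1) :=
          (hrank.rank_bounds hn v).2 (h.trans_le hw)
      _ ≤ n * edgeWeight (.fromEdgeSet (Uset n)) 2 w := Nat.mul_le_mul_left n h
      _ ≤ rank w := (hrank.rank_bounds hn w).1

end Zigzag

theorem stmt14_general {K : Type*} [Field K] {n : ℕ} (hn : 2 ≤ n) {G : SimpleGraph (Fin n)}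
    (φ : SimpleGraph.cycleGraph n ≃g G) {rank : Sym2 (Fin n) → ℕ} (hrank : IsEdgeRank G rank) :
    (∃ B : Set (MvPolynomial (Sym2 (Fin n)) K),
      initialIdeal rank (minorsIdeal K n (n - 2)) = Ideal.span B ∧
      ∀ g ∈ B, ∃ μ : Sym2 (Fin n) →₀ ℕ, (∀ v : Sym2 (Fin n), μ v ≤ 1) ∧ g = monomial μ 1) ∧
    (initialIdeal rank (minorsIdeal K n (n - 2))).IsRadical := by
  let L : Set (Sym2 (Fin n) →₀ ℕ) :=
    {m | ∃ (φ : SimpleGraph.cycleGraph n ≃g G) (Q : MinorIndex n), m = Q.leadExponent φ}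
  have hL : ∀ m ∈ L, ∀ v, m v ≤ 1 := by
    rintro _ ⟨φ, Q, rfl⟩
    exact MinorIndex.leadExponent_apply_le_one
  have hspan : initialIdeal rank (minorsIdeal K n (n - 2)) =
      Ideal.span ((fun m => monomial m (1 : K)) '' L) := by
    refine initialIdeal_eq_span_of_support hrank.injective ?_ fun f hf hf0 => ?_
    · rintro _ ⟨φ, Q, rfl⟩
      exact MinorIndex.exists_mem_minorsIdeal K hrank
    · obtain ⟨μ, hμ, φ, Q, hle⟩ := exists_leadExponent_le hn φ hf hf0
      exact ⟨μ, hμ, _, ⟨φ, Q, rfl⟩, hle⟩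
  refine ⟨⟨_, hspan, ?_⟩, hspan ▸ isRadical_span_squarefree_monomials hL⟩
  rintro _ ⟨m, hm, rfl⟩
  exact ⟨m, hL m hm, rfl⟩

/-- **Theorem 1.1(2), first part.** For `n ≥ 4`, the initial ideal `in_≺(I_{n-2})` is a
squarefree monomial ideal (it is generated by squarefree monomials); in particular it is
a radical ideal. -/
theorem stmt14 {K : Type*} [Field K] (n : ℕ) (hn : 4 ≤ n)
    (rank : Sym2 (Fin n) → ℕ) (hrank : IsGoodRank n rank) :
    (∃ G : Set (MvPolynomial (Sym2 (Fin n)) K),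
      initialIdeal rank (minorsIdeal K n (n - 2)) = Ideal.span G ∧
      ∀ g ∈ G, ∃ μ : Sym2 (Fin n) →₀ ℕ, (∀ v : Sym2 (Fin n), μ v ≤ 1) ∧
        g = MvPolynomial.monomial μ 1) ∧
    (initialIdeal rank (minorsIdeal K n (n - 2))).IsRadical :=
  stmt14_general (by omega) (zigzagIso (by omega)) (hrank.isEdgeRank (by omega))
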